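/- arXiv:2410.02105 — 2 statements merged into one kernel-verified Lean document; each statement's English description precedes it below -/
import Mathlib

section
/- For integers n ≥ k ≥ d ≥ 1, the quotient ring ℤ[x_1,…,x_n,y_1,…,y_d]^{S_d}/(ℤ[x_1,…,x_n,y_1,…,y_d]^{S_d}·G) is spanned over ℤ by the images of the elements of C_{n,k,d}, where ℤ[x_1,…,x_n,y_1,…,y_d]^{S_d}·G denotes the ideal of the invariant ring generated by G. -/
open MvPolynomial

set_option synthInstance.maxHeartbeats 1000000
set_option maxHeartbeats 4000000

/-- The elementary symmetric polynomial `e_r` in the x-variables, over `ℤ`. -/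
noncomputable def eXZ (n d r : ℕ) : MvPolynomial (Fin n ⊕ Fin d) ℤ :=
  rename Sum.inl (esymm (Fin n) ℤ r)

/-- The complete homogeneous symmetric polynomial `h_r` in the y-variables, over `ℤ`. -/
noncomputable def hYZ (n d r : ℕ) : MvPolynomial (Fin n ⊕ Fin d) ℤ :=
  rename Sum.inr (hsymm (Fin d) ℤ r)

/-- The elementary symmetric polynomial `e_r` in the y-variables, over `ℤ`. -/
noncomputable def eYZ (n d r : ℕ) : MvPolynomial (Fin n ⊕ Fin d) ℤ :=
  rename Sum.inr (esymm (Fin d) ℤ r)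

/-- `Σ_{a+b=r} (−1)^b e_a(x_1,…,x_n)·h_b(y_1,…,y_d)`, over `ℤ`. -/
noncomputable def genXYZ (n d r : ℕ) : MvPolynomial (Fin n ⊕ Fin d) ℤ :=
  ∑ j ∈ Finset.range (r + 1),
    (-1 : MvPolynomial (Fin n ⊕ Fin d) ℤ) ^ j * (eXZ n d (r - j) * hYZ n d j)

/-- `Σ_{j=0}^{d} (−1)^j x_i^{d−j} e_j(y_1,…,y_d)`, over `ℤ`. -/
noncomputable def genPowZ (n d : ℕ) (i : Fin n) : MvPolynomial (Fin n ⊕ Fin d) ℤ :=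
  ∑ j ∈ Finset.range (d + 1),
    (-1 : MvPolynomial (Fin n ⊕ Fin d) ℤ) ^ j * (X (Sum.inl i) ^ (d - j) * eYZ n d j)

/-- The set `G ⊆ ℤ[x_1,…,x_n,y_1,…,y_d]` of generators of the ideal `J_{n,k,d}`. -/
def GgensZ (n k d : ℕ) : Set (MvPolynomial (Fin n ⊕ Fin d) ℤ) :=
  {p | ∃ r, k - d < r ∧ p = hYZ n d r} ∪
  {p | ∃ r, n - d < r ∧ p = genXYZ n d r} ∪
  {p | ∃ i : Fin n, p = genPowZ n d i}

/-- The permutation of the variable index set `Fin n ⊕ Fin d` induced by a permutation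
of the y-indices. -/
def permY (n d : ℕ) (g : Equiv.Perm (Fin d)) : (Fin n ⊕ Fin d) ≃ (Fin n ⊕ Fin d) :=
  Equiv.sumCongr (Equiv.refl (Fin n)) g

/-- The subring of `S_d`-invariants of `ℤ[x_1,…,x_n,y_1,…,y_d]`, where `S_d` permutes
the variables `y_1,…,y_d` and fixes the x-variables. -/
noncomputable def invZ2 (n d : ℕ) : Subalgebra ℤ (MvPolynomial (Fin n ⊕ Fin d) ℤ) where
  carrier := {f | ∀ g : Equiv.Perm (Fin d), rename (⇑(permY n d g)) f = f}
  mul_mem' := fun ha hb g => by rw [map_mul, ha g, hb g]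
  add_mem' := fun ha hb g => by rw [map_add, ha g, hb g]
  one_mem' := fun g => by rw [map_one]
  zero_mem' := fun g => by rw [map_zero]
  algebraMap_mem' := fun r g => by rw [MvPolynomial.algebraMap_eq, rename_C]

/-- An `(n,d)`-staircase: a shuffle of the sequence `(0,1,…,d−1)` with `n−d` copies
of `d−1`, i.e. the values `0, 1, …, d−1` appear in this order at some increasing set of
`d` positions and every other entry equals `d−1`. -/
def IsStaircase (n d : ℕ) (s : Fin n → ℕ) : Prop :=
  ∃ φ : Fin d → Fin n, StrictMono φ ∧ (∀ t, s (φ t) = t) ∧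
    ∀ j : Fin n, (∀ t, j ≠ φ t) → s j = d - 1

/-- An `(n,d)`-substaircase sequence: componentwise at most some `(n,d)`-staircase. -/
def IsSubstaircase (n d : ℕ) (a : Fin n → ℕ) : Prop :=
  ∃ s, IsStaircase n d s ∧ ∀ j, a j ≤ s j

/-- Complete homogeneous symmetric polynomial indexed by an integer
(interpreted as zero for a negative index). -/
noncomputable def hsymmZidx (σ : Type*) [Fintype σ] [DecidableEq σ] (R : Type*)
    [CommSemiring R] (m : ℤ) : MvPolynomial σ R :=
  if 0 ≤ m then hsymm σ R m.toNat else 0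

/-- The Schur polynomial `s_λ` in the `d` variables `y_1,…,y_d` over `ℤ`, defined via the
Jacobi–Trudi determinant `det(h_{λ_i − i + j})_{1 ≤ i,j ≤ d}` (for `λ` a partition with at
most `d` parts, recorded as a weakly decreasing function `Fin d → ℕ`). -/
noncomputable def schurPoly (d : ℕ) (lam : Fin d → ℕ) : MvPolynomial (Fin d) ℤ :=
  (Matrix.of fun i j : Fin d =>
    hsymmZidx (Fin d) ℤ ((lam i : ℤ) - ((i : ℕ) : ℤ) + ((j : ℕ) : ℤ))).det

/-- The set `C_{n,k,d} ⊆ ℤ[x,y]^{S_d}` of products of substaircase monomials in the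
x-variables with Schur polynomials `s_λ(y_1,…,y_d)` for partitions `λ ⊆ (k−d)^d`. -/
def CsetZ (n k d : ℕ) : Set (MvPolynomial (Fin n ⊕ Fin d) ℤ) :=
  {p | ∃ a : Fin n → ℕ, IsSubstaircase n d a ∧
    ∃ lam : Fin d → ℕ, Antitone lam ∧ (∀ i, lam i ≤ k - d) ∧
      p = (∏ j, X (Sum.inl j) ^ a j) * rename Sum.inr (schurPoly d lam)}

/-!
The `y`-variables enter the quotient through the ring `Λ` of symmetric polynomials, over which it
is generated by the `x_i`. Since `h_r(y) = 0` for large `r`, the identity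
`(∑ (-1)^r e_r t^r) (∑ h_r t^r) = 1` exhibits a polynomial in `t` as a unit, so each `e_r(y)` with
`r > 0` is nilpotent. By nilpotency (Nakayama), monomials in the `x_i` that span after setting
`y = 0` span over `Λ`. For `y = 0` the relations become `x_i ^ d = 0` and `e_r(x) = 0` for
`r > n - d`, and induction on `n` reduces every monomial to substaircase ones. Finally `Λ` is
spanned over `ℤ` by the Schur polynomials, by the Pieri rule for `e_r s_λ`, and `s_λ` vanishes in
the quotient as soon as `λ_1 > k - d`, because the first row of its Jacobi–Trudi matrix does.
-/

theorem eq_top_of_sup_smul_top_eq_top {R M : Type*} [CommRing R] [AddCommGroup M] [Module R M]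
    {N : Submodule R M} {I : Ideal R} {s : ℕ} (hI : I ^ s • (⊤ : Submodule R M) = ⊥)
    (hN : N ⊔ I • (⊤ : Submodule R M) = ⊤) : N = ⊤ := by
  have sup_pow (t : ℕ) : N ⊔ I ^ t • (⊤ : Submodule R M) = ⊤ := by
    induction t with
    | zero => simp
    | succ t ih =>
      refine eq_top_iff.2 (ih.ge.trans (sup_le le_sup_left ?_))
      calc I ^ t • (⊤ : Submodule R M) = I ^ t • N ⊔ I ^ (t + 1) • ⊤ := by
            rw [← hN, Submodule.smul_sup, ← Submodule.mul_smul, ← pow_succ, hN]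
        _ ≤ N ⊔ I ^ (t + 1) • ⊤ := sup_le_sup_right Submodule.smul_le_right _
  simpa [hI] using sup_pow s

theorem eq_top_of_adjoin_eq_top_of_mul_mem {R A : Type*} [CommRing R] [CommRing A] [Algebra R A]
    {s : Set A} (hs : Algebra.adjoin R s = ⊤) {N : Submodule R A} (h_one : 1 ∈ N)
    (h_mul : ∀ a ∈ s, ∀ q ∈ N, a * q ∈ N) : N = ⊤ := by
  have mul_mem (a : A) : ∀ q ∈ N, a * q ∈ N := by
    have ha : a ∈ Algebra.adjoin R s := hs ▸ Algebra.mem_top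
    induction ha using Algebra.adjoin_induction with
    | mem a ha => exact h_mul a ha
    | algebraMap r => exact fun q hq => by simpa [Algebra.smul_def] using N.smul_mem r hq
    | add a b _ _ ha hb => exact fun q hq => by simpa [add_mul] using N.add_mem (ha q hq) (hb q hq)
    | mul a b _ _ ha hb => exact fun q hq => by simpa [mul_assoc] using ha _ (hb q hq)
  exact eq_top_iff.2 fun a _ => by simpa using mul_mem a 1 h_one

theorem mem_of_sum_range_succ_eq_zero {A : Type*} [CommRing A] {J : Ideal A} {f : ℕ → A} {r : ℕ}
    (hsum : ∑ j ∈ Finset.range (r + 1), f j = 0) (hf : ∀ j ≠ 0, f j ∈ J) : f 0 ∈ J := by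
  rw [Finset.sum_range_succ'] at hsum
  rw [eq_neg_of_add_eq_zero_right hsum]
  exact J.neg_mem (J.sum_mem fun j _ => hf _ j.succ_ne_zero)

/-- The sequences of length `n` that lie componentwise below a shuffle of `(0, 1, …, j - 1)` with
`n - j` copies of `d - 1`; the map `φ` records the positions of `0, 1, …, j - 1` in the shuffle.
The case `j = d` gives the substaircases, and varying `j` allows an induction on `n`. -/
def IsPartialSubstaircase (n d j : ℕ) (a : Fin n → ℕ) : Prop :=
  (∀ i, a i < d) ∧ ∃ φ : Fin j → Fin n, StrictMono φ ∧ ∀ t, a (φ t) ≤ t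

namespace IsPartialSubstaircase

variable {n d j p : ℕ} {a : Fin n → ℕ}

theorem snoc (h : IsPartialSubstaircase n d j a) (hp : p < d) :
    IsPartialSubstaircase (n + 1) d j (Fin.snoc a p : Fin (n + 1) → ℕ) := by
  obtain ⟨ha, φ, hφ, haφ⟩ := h
  exact ⟨Fin.lastCases (by simpa) (by simpa), Fin.castSucc ∘ φ,
    Fin.strictMono_castSucc.comp hφ, by simpa using haφ⟩

theorem snoc_succ (h : IsPartialSubstaircase n d j a) (hp : p < d) (hpj : p ≤ j) :
    IsPartialSubstaircase (n + 1) d (j + 1) (Fin.snoc a p : Fin (n + 1) → ℕ) := by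
  obtain ⟨ha, φ, hφ, haφ⟩ := h
  refine ⟨Fin.lastCases (by simpa) (by simpa),
    Fin.snoc (α := fun _ => Fin (n + 1)) (Fin.castSucc ∘ φ) (Fin.last n), ?_,
    Fin.lastCases (by simpa) (by simpa)⟩
  refine Fin.lastCases (fun t' h => absurd h (Fin.le_last t').not_gt) fun t => ?_
  refine Fin.lastCases (fun _ => ?_) fun t' htt' => ?_
  · simp
  · simpa using hφ (Fin.castSucc_lt_castSucc_iff.1 htt')

theorem isSubstaircase (h : IsPartialSubstaircase n d d a) : IsSubstaircase n d a := by
  obtain ⟨ha, φ, hφ, haφ⟩ := h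
  set s : Fin n → ℕ := Function.extend φ (fun t => (t : ℕ)) fun _ => d - 1
  have s_of_mem (t : Fin d) : s (φ t) = t := hφ.injective.extend_apply _ _ t
  have s_of_notMem (i : Fin n) (hi : ¬∃ t, φ t = i) : s i = d - 1 :=
    Function.extend_apply' _ _ i hi
  refine ⟨s, ⟨φ, hφ, s_of_mem, fun i hi => s_of_notMem i ?_⟩, fun i => ?_⟩
  · exact fun ⟨t, ht⟩ => hi t ht.symm
  · by_cases hi : ∃ t, φ t = i
    · obtain ⟨t, rfl⟩ := hi
      exact (haφ t).trans (s_of_mem t).ge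
    · exact (Nat.le_sub_one_of_lt (ha i)).trans (s_of_notMem i hi).ge

end IsPartialSubstaircase

theorem esymm_eq_zero_of_card_lt {σ R : Type*} [CommSemiring R] [Fintype σ] {r : ℕ}
    (hr : Fintype.card σ < r) : esymm σ R r = 0 := by
  rw [esymm, Finset.powersetCard_eq_empty.2 hr, Finset.sum_empty]

section Staircase

variable (R : Type*) [CommRing R] {n d j p : ℕ}

theorem esymm_fin_succ (n r : ℕ) :
    esymm (Fin (n + 1)) R (r + 1) = rename Fin.castSucc (esymm (Fin n) R (r + 1)) +
      rename Fin.castSucc (esymm (Fin n) R r) * X (Fin.last n) := by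
  have rename_esymm (r : ℕ) : rename Fin.castSucc (esymm (Fin n) R r) =
      ((Finset.univ.val.map Fin.castSucc).map (X : Fin (n + 1) → MvPolynomial _ R)).esymm r := by
    rw [Multiset.map_map, rename_eq_aeval]
    exact aeval_esymm_eq_multiset_esymm (Fin n) R r
      (X ∘ Fin.castSucc : Fin n → MvPolynomial (Fin (n + 1)) R)
  have univ_val : (Finset.univ : Finset (Fin (n + 1))).val =
      Fin.last n ::ₘ Finset.univ.val.map Fin.castSucc := by
    rw [Fin.univ_castSuccEmb]
    rfl
  rw [rename_esymm, rename_esymm, esymm_eq_multiset_esymm, univ_val, Multiset.map_cons]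
  simp only [Multiset.esymm, Multiset.powersetCard_cons, Multiset.map_add, Multiset.sum_add,
    Multiset.map_map, Function.comp_def, Multiset.prod_cons, Multiset.sum_map_mul_right,
    mul_comm (X (Fin.last n))]

/-- The ideal generated by the powers `x_i ^ d` and the elementary symmetric polynomials of degree
`> n - j`, stated without the truncated subtraction. -/
noncomputable def staircaseIdeal (n d j : ℕ) : Ideal (MvPolynomial (Fin n) R) :=
  Ideal.span (Set.range (fun i => X i ^ d) ∪ esymm (Fin n) R '' {r | n < r + j})

variable {R}

theorem X_pow_mem_staircaseIdeal (i : Fin n) :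
    (X i ^ d : MvPolynomial (Fin n) R) ∈ staircaseIdeal R n d j :=
  Ideal.subset_span (Or.inl ⟨i, rfl⟩)

theorem esymm_mem_staircaseIdeal {r : ℕ} (hr : n < r + j) :
    esymm (Fin n) R r ∈ staircaseIdeal R n d j :=
  Ideal.subset_span (Or.inr ⟨r, hr, rfl⟩)

-- Trade `e_r(x_1, …, x_n) x_{n+1}` for `-e_{r+1}(x_1, …, x_n)` until the degree exceeds `n`.
theorem rename_esymm_mul_X_pow_mem_staircaseIdeal {r : ℕ} (hr : n < r + j) (hp : n < r + p) :
    rename Fin.castSucc (esymm (Fin n) R r) * X (Fin.last n) ^ p ∈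
      staircaseIdeal R (n + 1) d j := by
  induction p generalizing r with
  | zero => simp [esymm_eq_zero_of_card_lt (σ := Fin n) (R := R) (by simpa using hp)]
  | succ p ih =>
    have h_lower := ih (r := r + 1) (by omega) (by omega)
    have h_full := Ideal.mul_mem_right (X (Fin.last n) ^ p) _
      (esymm_mem_staircaseIdeal (R := R) (d := d) (show n + 1 < r + 1 + j by omega))
    rw [esymm_fin_succ] at h_full
    convert sub_mem h_full h_lower using 1
    ring

/-- Multiplication by `x_{n+1} ^ p`, as a map from polynomials in the first `n` variables to
polynomials in `n + 1` variables. -/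
noncomputable def mulLastPow (R : Type*) [CommRing R] (n p : ℕ) :
    MvPolynomial (Fin n) R →ₗ[R] MvPolynomial (Fin (n + 1)) R :=
  LinearMap.mulRight R (X (Fin.last n) ^ p) ∘ₗ (rename Fin.castSucc).toLinearMap

theorem mulLastPow_apply (f : MvPolynomial (Fin n) R) :
    mulLastPow R n p f = rename Fin.castSucc f * X (Fin.last n) ^ p := rfl

theorem mulLastPow_mem_staircaseIdeal (hp : j ≤ p) {f : MvPolynomial (Fin n) R}
    (hf : f ∈ staircaseIdeal R n d j) : mulLastPow R n p f ∈ staircaseIdeal R (n + 1) d j := by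
  induction hf using Submodule.span_induction with
  | mem f hf =>
    obtain ⟨i, rfl⟩ | ⟨r, hr, rfl⟩ := hf
    · simpa [mulLastPow_apply] using
        Ideal.mul_mem_right _ _ (X_pow_mem_staircaseIdeal (R := R) (d := d) i.castSucc)
    · exact rename_esymm_mul_X_pow_mem_staircaseIdeal hr (lt_of_lt_of_le hr (by omega))
  | zero => simp
  | add f g _ _ hf hg => simpa using add_mem hf hg
  | smul c f _ hf => simpa [mulLastPow_apply, mul_assoc] using Ideal.mul_mem_left _ _ hf

theorem exists_mulLastPow_add_mem_staircaseIdeal (p : ℕ) {f : MvPolynomial (Fin n) R}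
    (hf : f ∈ staircaseIdeal R n d j) :
    ∃ g, mulLastPow R n p f + mulLastPow R n (p + 1) g ∈ staircaseIdeal R (n + 1) d (j + 1) := by
  induction hf using Submodule.span_induction with
  | mem f hf =>
    obtain ⟨i, rfl⟩ | ⟨_ | r, hr : n < _, rfl⟩ := hf
    · exact ⟨0, by simpa [mulLastPow_apply] using
        Ideal.mul_mem_right _ _ (X_pow_mem_staircaseIdeal (R := R) (d := d) i.castSucc)⟩
    · have h_one := esymm_mem_staircaseIdeal (R := R) (d := d) (show n + 1 < 0 + (j + 1) by omega)
      rw [esymm_zero] at h_one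
      exact ⟨0, Ideal.eq_top_iff_one _ |>.2 h_one ▸ Submodule.mem_top⟩
    · refine ⟨esymm (Fin n) R r, ?_⟩
      have h_esymm := Ideal.mul_mem_right (X (Fin.last n) ^ p) _
        (esymm_mem_staircaseIdeal (R := R) (d := d) (show n + 1 < r + 1 + (j + 1) by omega))
      rw [esymm_fin_succ] at h_esymm
      convert h_esymm using 1
      simp only [mulLastPow_apply]
      ring
  | zero => exact ⟨0, by simp⟩
  | add f₁ f₂ _ _ h₁ h₂ =>
    obtain ⟨⟨g₁, hg₁⟩, g₂, hg₂⟩ := And.intro h₁ h₂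
    refine ⟨g₁ + g₂, ?_⟩
    simpa only [map_add, add_add_add_comm] using add_mem hg₁ hg₂
  | smul c f _ h =>
    obtain ⟨g, hg⟩ := h
    refine ⟨c * g, ?_⟩
    simpa [mulLastPow_apply, mul_add, mul_assoc] using
      Ideal.mul_mem_left _ (rename Fin.castSucc c) hg

theorem eq_top_of_mulLastPow_mem {T : Submodule R (MvPolynomial (Fin (n + 1)) R)}
    (hT : ∀ p f, mulLastPow R n p f ∈ T) : T = ⊤ := by
  refine eq_top_iff.2 fun f _ => ?_
  induction f using MvPolynomial.induction_on' with
  | monomial s c =>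
    convert hT (s (Fin.last n)) (C c * ∏ i, X i ^ s i.castSucc) using 1
    simp [mulLastPow_apply, monomial_eq, Finsupp.prod_fintype, Fin.prod_univ_castSucc, mul_assoc]
  | add f g hf hg => exact T.add_mem (hf trivial) (hg trivial)

theorem prod_X_pow_snoc (a : Fin n → ℕ) (p : ℕ) :
    ∏ i, (X i : MvPolynomial (Fin (n + 1)) R) ^ (Fin.snoc a p : Fin (n + 1) → ℕ) i =
      mulLastPow R n p (∏ i, X i ^ a i) := by
  simp [mulLastPow_apply, Fin.prod_univ_castSucc]

theorem eq_top_of_staircaseIdeal_le {T : Submodule R (MvPolynomial (Fin n) R)}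
    (h_mon : ∀ a, IsPartialSubstaircase n d j a → ∏ i, X i ^ a i ∈ T)
    (h_ideal : ∀ f ∈ staircaseIdeal R n d j, f ∈ T) : T = ⊤ := by
  induction n generalizing j with
  | zero =>
    refine eq_top_iff.2 fun f _ => ?_
    obtain rfl | hj := j.eq_zero_or_pos
    · have h_one : 1 ∈ T := by
        simpa using h_mon 0 ⟨fun i => i.elim0, id, strictMono_id, fun t => t.elim0⟩
      rw [f.eq_C_of_isEmpty, ← mul_one (C _), ← smul_eq_C_mul]
      exact T.smul_mem _ h_one
    · have h_one := esymm_mem_staircaseIdeal (R := R) (d := d) (r := 0) (by simpa using hj)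
      rw [esymm_zero] at h_one
      exact h_ideal f (by rw [(Ideal.eq_top_iff_one _).2 h_one]; trivial)
  | succ n ih =>
    refine eq_top_of_mulLastPow_mem fun p => ?_
    induction hm : d - p generalizing p with
    | zero =>
      intro f
      refine h_ideal _ (Ideal.mul_mem_left _ _ ?_)
      exact Ideal.pow_mem_of_pow_mem _ (X_pow_mem_staircaseIdeal (Fin.last n)) (by omega)
    | succ m ihm =>
      have hp : p < d := by omega
      have h_next := ihm (p + 1) (by omega)
      suffices h : T.comap (mulLastPow R n p) = ⊤ from fun f => (h ▸ Submodule.mem_top : f ∈ _)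
      obtain hjp | ⟨j, rfl, hpj⟩ : j ≤ p ∨ ∃ j', j = j' + 1 ∧ p ≤ j' := by
        rcases j with _ | j
        · exact Or.inl (Nat.zero_le _)
        · exact (Nat.lt_or_ge p (j + 1)).symm.imp_right fun h => ⟨j, rfl, Nat.le_of_lt_succ h⟩
      · refine ih (j := j) (fun a ha => Submodule.mem_comap.2 ?_) fun f hf => ?_
        · exact prod_X_pow_snoc (R := R) a p ▸ h_mon _ (ha.snoc hp)
        · exact h_ideal _ (mulLastPow_mem_staircaseIdeal hjp hf)
      · refine ih (j := j) (fun a ha => Submodule.mem_comap.2 ?_) fun f hf => ?_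
        · exact prod_X_pow_snoc (R := R) a p ▸ h_mon _ (ha.snoc_succ hp hpj)
        · obtain ⟨g, hg⟩ := exists_mulLastPow_add_mem_staircaseIdeal p hf
          exact (T.add_mem_iff_left (h_next g)).1 (h_ideal _ hg)

end Staircase

section Substaircase

variable {R Q : Type*} [CommRing R] [CommRing Q] [Algebra R Q] {n d : ℕ}

theorem aeval_mem_of_mem_staircaseIdeal {𝔞 : Ideal Q} {x : Fin n → Q} {j : ℕ}
    (h_pow : ∀ i, x i ^ d ∈ 𝔞) (h_esymm : ∀ r, n < r + j → aeval x (esymm (Fin n) R r) ∈ 𝔞)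
    {f : MvPolynomial (Fin n) R} (hf : f ∈ staircaseIdeal R n d j) : aeval x f ∈ 𝔞 := by
  refine Ideal.mem_comap.1 (Ideal.span_le.2 ?_ hf : f ∈ 𝔞.comap (aeval x))
  rintro _ (⟨i, rfl⟩ | ⟨r, hr, rfl⟩)
  · simpa using h_pow i
  · exact h_esymm r hr

theorem span_prod_pow_isSubstaircase_eq_top {x : Fin n → Q}
    (hx : Function.Surjective (aeval x : MvPolynomial (Fin n) R →ₐ[R] Q)) {𝔞 : Ideal R}
    (h_nil : IsNilpotent (𝔞.map (algebraMap R Q)))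
    (h_pow : ∀ i, x i ^ d ∈ 𝔞.map (algebraMap R Q))
    (h_esymm : ∀ r, n < r + d → aeval x (esymm (Fin n) R r) ∈ 𝔞.map (algebraMap R Q)) :
    Submodule.span R ((fun a => ∏ i, x i ^ a i) '' {a | IsSubstaircase n d a}) = ⊤ := by
  set N := Submodule.span R ((fun a => ∏ i, x i ^ a i) '' {a | IsSubstaircase n d a})
  obtain ⟨s, hs⟩ := h_nil
  have h_smul_top : 𝔞 ^ s • (⊤ : Submodule R Q) = ⊥ := by
    rw [Ideal.smul_top_eq_map, Ideal.map_pow, hs]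
    rfl
  refine eq_top_of_sup_smul_top_eq_top h_smul_top ?_
  have h_comap : (N ⊔ 𝔞 • (⊤ : Submodule R Q)).comap (aeval x).toLinearMap = ⊤ := by
    refine eq_top_of_staircaseIdeal_le (d := d) (j := d) (fun a ha => ?_) fun f hf => ?_
    · have h_mem : ∏ i, x i ^ a i ∈ N := Submodule.subset_span ⟨a, ha.isSubstaircase, rfl⟩
      simpa using Submodule.mem_sup_left h_mem
    · refine Submodule.mem_sup_right ?_
      rw [Ideal.smul_top_eq_map]
      exact aeval_mem_of_mem_staircaseIdeal h_pow h_esymm hf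
  exact eq_top_iff.2 fun q _ => by
    obtain ⟨f, rfl⟩ := hx q
    exact (h_comap ▸ Submodule.mem_top : f ∈ _)

end Substaircase

section GeneratingFunctions

variable {σ R : Type*} [CommRing R]

theorem one_sub_C_mul_X_mul_mk_pow (a : R) :
    (1 - PowerSeries.C a * PowerSeries.X) * PowerSeries.mk (fun m => a ^ m) = 1 := by
  ext m
  rcases m with _ | m
  · simp
  · rw [sub_mul, one_mul, mul_assoc, map_sub, PowerSeries.coeff_C_mul,
      PowerSeries.coeff_succ_X_mul]
    simp [pow_succ', PowerSeries.coeff_one]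

theorem coeff_prod_one_sub_C_mul_X {ι : Type*} (s : Finset ι) (a : ι → R) (r : ℕ) :
    PowerSeries.coeff r (∏ i ∈ s, (1 - PowerSeries.C (a i) * PowerSeries.X)) =
      (-1) ^ r * ∑ t ∈ s.powersetCard r, ∏ i ∈ t, a i := by
  have one_sub (i : ι) : 1 - PowerSeries.C (a i) * PowerSeries.X =
      1 + PowerSeries.monomial 1 (-a i) := by
    rw [PowerSeries.X_eq, ← PowerSeries.smul_eq_C_mul, ← map_smul, smul_eq_mul, mul_one, map_neg,
      sub_eq_add_neg]
  have coeff_prod_monomial (t : Finset ι) :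
      PowerSeries.coeff r (∏ i ∈ t, PowerSeries.monomial 1 (-a i)) =
        if t.card = r then (-1) ^ r * ∏ i ∈ t, a i else 0 := by
    rw [PowerSeries.prod_monomial (fun _ => 1), PowerSeries.coeff_monomial, Finset.prod_neg,
      Finset.sum_const, smul_eq_mul, mul_one]
    grind
  simp only [one_sub, Finset.prod_one_add, map_sum, coeff_prod_monomial]
  rw [← Finset.sum_filter, ← Finset.powersetCard_eq_filter, Finset.mul_sum]

variable (σ R) [Fintype σ] [DecidableEq σ]

theorem mk_hsymm :
    PowerSeries.mk (hsymm σ R) = ∏ i : σ, PowerSeries.mk fun m => (X i : MvPolynomial σ R) ^ m := by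
  ext1 r
  simp only [PowerSeries.coeff_prod, PowerSeries.coeff_mk, hsymm]
  refine Finset.sum_bij' (fun s _ => Multiset.toFinsupp s.1)
    (fun l hl => ⟨Finsupp.toMultiset l, ?_⟩) ?_ ?_ ?_ ?_ ?_
  · rw [Finsupp.card_toMultiset, ← (Finset.mem_finsuppAntidiag.1 hl).1,
      Finsupp.sum_fintype _ _ (by simp)]
    rfl
  · intro s _
    rw [Finset.mem_finsuppAntidiag]
    exact ⟨(Multiset.sum_count_eq_card (by simp)).trans s.2, Finset.subset_univ _⟩
  · exact fun l _ => Finset.mem_univ _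
  · exact fun s _ => Subtype.ext (Multiset.toFinsupp_toMultiset s.1)
  · exact fun l _ => Finsupp.toMultiset_toFinsupp l
  · intro s _
    rw [Finset.prod_multiset_map_count]
    refine Finset.prod_subset (Finset.subset_univ _) fun i _ hi => ?_
    rw [Multiset.count_eq_zero_of_notMem (by simpa using hi), pow_zero]

variable {σ R}

theorem prod_one_sub_mul_mk_hsymm (s : Finset σ) :
    (∏ i ∈ s, (1 - PowerSeries.C (X i : MvPolynomial σ R) * PowerSeries.X)) *
        PowerSeries.mk (hsymm σ R) =
      ∏ i ∈ sᶜ, PowerSeries.mk fun m => X i ^ m := by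
  rw [mk_hsymm, ← Finset.prod_mul_prod_compl s, ← mul_assoc, ← Finset.prod_mul_distrib]
  simp only [one_sub_C_mul_X_mul_mk_pow, Finset.prod_const_one, one_mul]

variable (σ R)

theorem mk_esymm_mul_mk_hsymm :
    PowerSeries.mk (fun r => (-1) ^ r * esymm σ R r) * PowerSeries.mk (hsymm σ R) = 1 := by
  have h := prod_one_sub_mul_mk_hsymm (R := R) (Finset.univ : Finset σ)
  rw [Finset.compl_univ, Finset.prod_empty] at h
  rw [← h]
  congr 1
  ext1 r
  rw [PowerSeries.coeff_mk, coeff_prod_one_sub_C_mul_X, esymm]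

variable {σ R}

theorem coeff_mul_mk_hsymm {f : PowerSeries (MvPolynomial σ R)} {N : ℕ}
    (hf : ∀ k, N ≤ k → PowerSeries.coeff k f = 0) (m : ℕ) :
    PowerSeries.coeff m (f * PowerSeries.mk (hsymm σ R)) =
      ∑ k ∈ Finset.range N, PowerSeries.coeff k f * hsymmZidx σ R (m - k) := by
  have hsymmZidx_sub (k : ℕ) : hsymmZidx σ R (m - k) = if k ≤ m then hsymm σ R (m - k) else 0 := by
    rw [hsymmZidx]
    congr 1
    · simp
    · congr 1; omega
  rw [PowerSeries.coeff_mul, Finset.Nat.sum_antidiagonal_eq_sum_range_succ_mk]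
  simp only [hsymmZidx_sub, PowerSeries.coeff_mk, mul_ite, mul_zero, ← Finset.sum_filter]
  refine (Finset.sum_subset ?_ ?_).symm
  · intro k hk
    simp only [Finset.mem_filter, Finset.mem_range] at hk ⊢
    omega
  · intro k hk hk'
    rw [hf k, zero_mul]
    simp only [Finset.mem_filter, Finset.mem_range] at hk hk'
    omega

theorem X_pow_eq_sum_coeff_mul_hsymmZidx (i : σ) (m : ℕ) :
    (X i : MvPolynomial σ R) ^ m = ∑ k ∈ Finset.range (Fintype.card σ), PowerSeries.coeff k
      (∏ l ∈ {i}ᶜ, (1 - PowerSeries.C (X l : MvPolynomial σ R) * PowerSeries.X)) *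
        hsymmZidx σ R (m - k) := by
  rw [← coeff_mul_mk_hsymm, prod_one_sub_mul_mk_hsymm, compl_compl, Finset.prod_singleton,
    PowerSeries.coeff_mk]
  intro k hk
  have := Fintype.card_pos_iff.2 ⟨i⟩
  rw [coeff_prod_one_sub_C_mul_X, Finset.powersetCard_eq_empty.2, Finset.sum_empty, mul_zero]
  rw [Finset.card_compl, Finset.card_singleton]
  omega

end GeneratingFunctions

section Schur

theorem esymm_mul_det_X_pow {σ R : Type*} [CommRing R] [Fintype σ] [DecidableEq σ] (r : ℕ)
    (b : σ → ℕ) :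
    esymm σ R r * (Matrix.of fun l i => (X l : MvPolynomial σ R) ^ b i).det =
      ∑ s ∈ Finset.univ.powersetCard r,
        (Matrix.of fun l i => (X l : MvPolynomial σ R) ^ (b i + if i ∈ s then 1 else 0)).det := by
  have prod_X_pow_add (π : Equiv.Perm σ) (s : Finset σ) :
      ∏ i, (X (π i) : MvPolynomial σ R) ^ (b i + if i ∈ s then 1 else 0) =
        (∏ i ∈ s, X (π i)) * ∏ i, X (π i) ^ b i := by
    simp only [pow_add, Finset.prod_mul_distrib, pow_ite, pow_one, pow_zero, Finset.prod_ite_mem,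
      Finset.univ_inter, mul_comm]
  simp only [Matrix.det_apply', Matrix.of_apply, prod_X_pow_add]
  rw [Finset.sum_comm, Finset.mul_sum]
  refine Finset.sum_congr rfl fun π _ => ?_
  rw [← Finset.mul_sum, ← Finset.sum_mul, mul_left_comm]
  congr 2
  conv_lhs => rw [← esymm_isSymmetric σ R r π, esymm]
  simp

variable {d : ℕ}

/-- The alternant `det (x_l ^ (λ_i + d - i))` with rows and columns numbered from `1`, that is, the
numerator of the bialternant formula for the Schur polynomial of `λ`. -/
noncomputable def alternant (d : ℕ) (lam : Fin d → ℕ) : MvPolynomial (Fin d) ℤ :=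
  (Matrix.of fun l i : Fin d => (X l : MvPolynomial (Fin d) ℤ) ^ (lam i + i.rev)).det

theorem esymm_mul_alternant (r : ℕ) (lam : Fin d → ℕ) :
    esymm (Fin d) ℤ r * alternant d lam = ∑ s ∈ Finset.univ.powersetCard r,
      alternant d (fun i => lam i + if i ∈ s then 1 else 0) := by
  simp only [alternant, esymm_mul_det_X_pow, add_right_comm]

theorem alternant_zero_ne_zero : alternant d 0 ≠ 0 := by
  have h_vandermonde : alternant d 0 = ((Matrix.vandermonde X).submatrix id Fin.revPerm).det := by
    simp only [alternant, Pi.zero_apply, zero_add]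
    rfl
  rw [h_vandermonde, Matrix.det_permute', Ne, mul_eq_zero, not_or]
  exact ⟨by simp, Matrix.det_vandermonde_ne_zero_iff.2 X_injective⟩

theorem schurPoly_zero : schurPoly d 0 = 1 := by
  rw [schurPoly, Matrix.det_of_isUpperTriangular]
  · simp [hsymmZidx]
  · intro i j (hij : j < i)
    simp [hsymmZidx, hij]

theorem exists_alternant_eq_mul_schurPoly (d : ℕ) :
    ∃ c, ∀ lam, alternant d lam = c * schurPoly d lam := by
  refine ⟨(Matrix.of fun l j : Fin d => PowerSeries.coeff j.rev (∏ i ∈ {l}ᶜ,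
    (1 - PowerSeries.C (X i : MvPolynomial (Fin d) ℤ) * PowerSeries.X))).det, fun lam => ?_⟩
  rw [schurPoly, ← Matrix.det_transpose (Matrix.of fun i j => hsymmZidx _ _ _), ← Matrix.det_mul,
    alternant]
  congr 1
  ext1 l i
  have index_eq (j : Fin d) :
      ((lam i + i.rev : ℕ) : ℤ) - (j.rev : ℕ) = lam i - (i : ℕ) + (j : ℕ) := by
    simp only [Fin.val_rev]
    omega
  rw [Matrix.of_apply, X_pow_eq_sum_coeff_mul_hsymmZidx, Fintype.card_fin, Finset.sum_range,
    ← Equiv.sum_comp Fin.revPerm]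
  simp only [Fin.revPerm_apply, index_eq]
  rfl

theorem alternant_eq_mul_schurPoly (lam : Fin d → ℕ) :
    alternant d lam = alternant d 0 * schurPoly d lam := by
  obtain ⟨c, hc⟩ := exists_alternant_eq_mul_schurPoly d
  rw [hc lam, hc 0, schurPoly_zero, mul_one]

theorem esymm_mul_schurPoly (r : ℕ) (lam : Fin d → ℕ) :
    esymm (Fin d) ℤ r * schurPoly d lam = ∑ s ∈ Finset.univ.powersetCard r,
      schurPoly d (fun i => lam i + if i ∈ s then 1 else 0) := by
  refine mul_left_cancel₀ (alternant_zero_ne_zero (d := d)) ?_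
  rw [mul_left_comm, ← alternant_eq_mul_schurPoly, esymm_mul_alternant, Finset.mul_sum]
  simp only [← alternant_eq_mul_schurPoly]

theorem schurPoly_eq_zero_of_apply_succ {lam : Fin (d + 1) → ℕ} {i : Fin d}
    (h : lam i.succ = lam i.castSucc + 1) : schurPoly (d + 1) lam = 0 := by
  refine Matrix.det_zero_of_row_eq i.castSucc_lt_succ.ne (funext fun j => ?_)
  simp [h]

theorem antitone_or_schurPoly_add_eq_zero {lam : Fin d → ℕ} (hlam : Antitone lam)
    (s : Finset (Fin d)) :
    Antitone (fun i => lam i + if i ∈ s then 1 else 0) ∨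
      schurPoly d (fun i => lam i + if i ∈ s then 1 else 0) = 0 := by
  rcases d with _ | d
  · exact Or.inl (Subsingleton.antitone _)
  rw [Fin.antitone_iff_succ_le, or_iff_not_imp_left, not_forall]
  rintro ⟨i, hi⟩
  have h_le := hlam i.castSucc_lt_succ.le
  refine schurPoly_eq_zero_of_apply_succ (i := i) ?_
  grind

end Schur

theorem isNilpotent_of_mk_mul_mk_eq_one {A : Type*} [CommRing A] {a b : ℕ → A} {p q : ℕ}
    (ha : ∀ r, p ≤ r → a r = 0) (hb : ∀ r, q ≤ r → b r = 0)
    (hab : PowerSeries.mk a * PowerSeries.mk b = 1) {r : ℕ} (hr : r ≠ 0) : IsNilpotent (a r) := by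
  have coe_trunc_mk {c : ℕ → A} {N : ℕ} (hc : ∀ r, N ≤ r → c r = 0) :
      ((PowerSeries.mk c).trunc N : PowerSeries A) = PowerSeries.mk c := by
    ext r
    rw [Polynomial.coeff_coe, PowerSeries.coeff_trunc, PowerSeries.coeff_mk]
    exact ite_eq_left_iff.2 fun h => (hc r (not_lt.1 h)).symm
  have h_unit : IsUnit ((PowerSeries.mk a).trunc p) := by
    refine IsUnit.of_mul_eq_one ((PowerSeries.mk b).trunc q) (Polynomial.coe_injective A ?_)
    rw [Polynomial.coe_mul, coe_trunc_mk ha, coe_trunc_mk hb, hab, Polynomial.coe_one]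
  have h_nil := (Polynomial.isUnit_iff_coeff_isUnit_isNilpotent.1 h_unit).2 r hr
  rwa [← Polynomial.coeff_coe, coe_trunc_mk ha, PowerSeries.coeff_mk] at h_nil

section SymmetricSubalgebra

variable (σ R : Type*) [CommRing R] [Fintype σ]

/-- The elementary symmetric polynomial, as an element of the ring of symmetric polynomials. -/
noncomputable def symEsymm (r : ℕ) : symmetricSubalgebra σ R :=
  ⟨esymm σ R r, esymm_isSymmetric σ R r⟩

theorem symEsymm_zero : symEsymm σ R 0 = 1 :=
  Subtype.ext (esymm_zero σ R)

theorem adjoin_range_symEsymm : Algebra.adjoin R (Set.range (symEsymm σ R)) = ⊤ := by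
  have h_range := AlgHom.range_eq_top _ |>.2 (esymmAlgHom_surjective (σ := σ) R le_rfl)
  rw [esymmAlgHom, ← Algebra.adjoin_range_eq_range_aeval] at h_range
  exact top_le_iff.1 (h_range.ge.trans (Algebra.adjoin_mono (Set.range_subset_iff.2 fun i =>
    ⟨i + 1, rfl⟩)))

/-- The ideal of the ring of symmetric polynomials generated by the elementary symmetric
polynomials of positive degree, that is, by the symmetric polynomials without constant term. -/
noncomputable def symEsymmIdeal : Ideal (symmetricSubalgebra σ R) :=
  Ideal.span (Set.range fun i : Fin (Fintype.card σ) => symEsymm σ R (i + 1))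

variable {σ R}

theorem symEsymm_mem_symEsymmIdeal {r : ℕ} (hr : r ≠ 0) : symEsymm σ R r ∈ symEsymmIdeal σ R := by
  obtain h | h := le_or_gt r (Fintype.card σ)
  · exact Ideal.subset_span ⟨⟨r - 1, by omega⟩, congrArg (symEsymm σ R) (by simp; omega)⟩
  · rw [show symEsymm σ R r = 0 from Subtype.ext (esymm_eq_zero_of_card_lt h)]
    exact zero_mem _

variable (σ R) [DecidableEq σ]

theorem hsymmZidx_isSymmetric (m : ℤ) : (hsymmZidx σ R m).IsSymmetric := by
  rw [hsymmZidx]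
  split_ifs
  exacts [hsymm_isSymmetric σ R _, .zero]

/-- The complete homogeneous symmetric polynomial, as an element of the ring of symmetric
polynomials; it is zero in negative degrees. -/
noncomputable def symHsymm (m : ℤ) : symmetricSubalgebra σ R :=
  ⟨hsymmZidx σ R m, hsymmZidx_isSymmetric σ R m⟩

theorem symHsymm_zero : symHsymm σ R 0 = 1 :=
  Subtype.ext (by simp [symHsymm, hsymmZidx])

theorem coe_symHsymm_natCast (r : ℕ) :
    (symHsymm σ R r : MvPolynomial σ R) = hsymm σ R r := by
  simp [symHsymm, hsymmZidx]

theorem mk_symEsymm_mul_mk_symHsymm :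
    PowerSeries.mk (fun r => (-1) ^ r * symEsymm σ R r) *
      PowerSeries.mk (fun r => symHsymm σ R r) = 1 := by
  refine PowerSeries.map_injective (symmetricSubalgebra σ R).val.toRingHom
    Subtype.val_injective ?_
  rw [map_mul, map_one, ← mk_esymm_mul_mk_hsymm σ R]
  rfl

variable {σ R}

theorem symHsymm_mem_symEsymmIdeal {r : ℕ} (hr : r ≠ 0) :
    symHsymm σ R r ∈ symEsymmIdeal σ R := by
  have h_coeff := congrArg (PowerSeries.coeff r) (mk_symEsymm_mul_mk_symHsymm σ R)
  rw [PowerSeries.coeff_mul, Finset.Nat.sum_antidiagonal_eq_sum_range_succ_mk,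
    PowerSeries.coeff_one, if_neg hr] at h_coeff
  simpa [symEsymm_zero] using mem_of_sum_range_succ_eq_zero h_coeff fun j hj => by
    simpa using Ideal.mul_mem_right _ _ (Ideal.mul_mem_left _ _ (symEsymm_mem_symEsymmIdeal hj))

theorem isNilpotent_map_symEsymmIdeal {A : Type*} [CommRing A] {φ : symmetricSubalgebra σ R →+* A}
    {m : ℕ} (hφ : ∀ r : ℕ, m < r → φ (symHsymm σ R r) = 0) :
    IsNilpotent ((symEsymmIdeal σ R).map φ) := by
  have h_fg : (symEsymmIdeal σ R).FG := Submodule.fg_span (Set.finite_range _)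
  rw [(h_fg.map φ).isNilpotent_iff_le_nilradical, Ideal.map_le_iff_le_comap, symEsymmIdeal,
    Ideal.span_le]
  rintro _ ⟨i, rfl⟩
  have map_mk (f : ℕ → symmetricSubalgebra σ R) :
      PowerSeries.map φ (PowerSeries.mk f) = PowerSeries.mk fun r => φ (f r) := by
    ext
    simp
  have h_mul := congrArg (PowerSeries.map φ) (mk_symEsymm_mul_mk_symHsymm σ R)
  rw [map_mul, map_one, map_mk, map_mk] at h_mul
  have h_nil := isNilpotent_of_mk_mul_mk_eq_one (p := Fintype.card σ + 1) (q := m + 1)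
    (fun r hr => ?_) hφ h_mul i.1.succ_ne_zero
  · rw [map_mul, map_pow, map_neg, map_one] at h_nil
    exact Ideal.mem_comap.2 ((Ideal.unit_mul_mem_iff_mem _ (isUnit_one.neg.pow _)).1 h_nil)
  · rw [show symEsymm σ R r = 0 from Subtype.ext (esymm_eq_zero_of_card_lt hr), mul_zero, map_zero]

end SymmetricSubalgebra

section SymSchur

variable {d : ℕ}

/-- The Schur polynomial, as an element of the ring of symmetric polynomials. -/
noncomputable def symSchur (d : ℕ) (lam : Fin d → ℕ) : symmetricSubalgebra (Fin d) ℤ :=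
  (Matrix.of fun i j : Fin d => symHsymm (Fin d) ℤ (lam i - (i : ℕ) + (j : ℕ))).det

theorem coe_symSchur (lam : Fin d → ℕ) :
    (symSchur d lam : MvPolynomial (Fin d) ℤ) = schurPoly d lam :=
  AlgHom.map_det (symmetricSubalgebra (Fin d) ℤ).val _

theorem symEsymm_mul_symSchur (r : ℕ) (lam : Fin d → ℕ) :
    symEsymm (Fin d) ℤ r * symSchur d lam = ∑ s ∈ Finset.univ.powersetCard r,
      symSchur d (fun i => lam i + if i ∈ s then 1 else 0) := by
  refine Subtype.ext ?_
  push_cast [coe_symSchur]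
  exact esymm_mul_schurPoly r lam

theorem span_symSchur_eq_top :
    Submodule.span ℤ (symSchur d '' {lam | Antitone lam}) = ⊤ := by
  refine eq_top_of_adjoin_eq_top_of_mul_mem (adjoin_range_symEsymm (Fin d) ℤ) ?_ ?_
  · exact Submodule.subset_span
      ⟨0, antitone_const, Subtype.ext ((coe_symSchur _).trans schurPoly_zero)⟩
  rintro _ ⟨r, rfl⟩ q hq
  induction hq using Submodule.span_induction with
  | mem q hq =>
    obtain ⟨lam, hlam, rfl⟩ := hq
    rw [symEsymm_mul_symSchur]
    refine Submodule.sum_mem _ fun s _ => ?_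
    obtain h | h := antitone_or_schurPoly_add_eq_zero hlam s
    · exact Submodule.subset_span ⟨_, h, rfl⟩
    · rw [show symSchur d _ = 0 from Subtype.ext ((coe_symSchur _).trans h)]
      exact zero_mem _
  | zero => simp
  | add p q _ _ hp hq => simpa only [mul_add] using add_mem hp hq
  | smul c q _ hq => simpa only [mul_smul_comm] using Submodule.smul_mem _ c hq

theorem map_symSchur_eq_zero {A : Type*} [CommRing A] {φ : symmetricSubalgebra (Fin d) ℤ →+* A}
    {m : ℕ} (hφ : ∀ r : ℕ, m < r → φ (symHsymm (Fin d) ℤ r) = 0) {lam : Fin d → ℕ}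
    (hlam : Antitone lam) {i : Fin d} (hi : m < lam i) : φ (symSchur d lam) = 0 := by
  have : NeZero d := ⟨i.pos.ne'⟩
  rw [symSchur, RingHom.map_det]
  refine Matrix.det_eq_zero_of_row_eq_zero 0 fun j => ?_
  have h_lt : m < lam 0 + j := Nat.lt_add_right _ (hi.trans_le (hlam (Fin.zero_le i)))
  simpa using hφ _ h_lt

end SymSchur

theorem mk_aeval {σ R A : Type*} [CommRing R] [CommRing A] [Algebra R A]
    (I : Ideal A) (x : σ → A) (p : MvPolynomial σ R) :
    Ideal.Quotient.mk I (aeval x p) = aeval (Ideal.Quotient.mk I ∘ x) p :=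
  comp_aeval_apply x (Ideal.Quotient.mkₐ R I) p

section Relations

variable {σ R A : Type*} [CommRing R] [Fintype σ] [CommRing A] [Algebra (symmetricSubalgebra σ R) A]

theorem pow_mem_map_symEsymmIdeal {y : A} {N : ℕ}
    (hy : ∑ j ∈ Finset.range (N + 1), (-1) ^ j *
      (y ^ (N - j) * algebraMap (symmetricSubalgebra σ R) A (symEsymm σ R j)) = 0) :
    y ^ N ∈ (symEsymmIdeal σ R).map (algebraMap (symmetricSubalgebra σ R) A) := by
  simpa [symEsymm_zero] using mem_of_sum_range_succ_eq_zero hy fun j hj =>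
    Ideal.mul_mem_left _ _ <| Ideal.mul_mem_left _ _ <| Ideal.mem_map_of_mem _ <|
      symEsymm_mem_symEsymmIdeal hj

theorem mem_map_symEsymmIdeal_of_sum_mul_symHsymm_eq_zero [DecidableEq σ] {f : ℕ → A} {r : ℕ}
    (hf : ∑ j ∈ Finset.range (r + 1), (-1) ^ j *
      (f (r - j) * algebraMap (symmetricSubalgebra σ R) A (symHsymm σ R j)) = 0) :
    f r ∈ (symEsymmIdeal σ R).map (algebraMap (symmetricSubalgebra σ R) A) := by
  simpa [symHsymm_zero] using mem_of_sum_range_succ_eq_zero hf fun j hj =>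
    Ideal.mul_mem_left _ _ <| Ideal.mul_mem_left _ _ <| Ideal.mem_map_of_mem _ <|
      symHsymm_mem_symEsymmIdeal hj

end Relations

section Spanning

variable {n d m : ℕ} {A : Type*} [CommRing A] [Algebra (symmetricSubalgebra (Fin d) ℤ) A]

variable (d m) in
/-- The set `C_{n,k,d}` with `k = m + d`, for arbitrary elements `x_i` of an algebra over the ring
of symmetric polynomials. -/
def substaircaseSchurProducts (x : Fin n → A) : Set A :=
  {p | ∃ a : Fin n → ℕ, IsSubstaircase n d a ∧
    ∃ lam : Fin d → ℕ, Antitone lam ∧ (∀ i, lam i ≤ m) ∧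
      p = (∏ j, x j ^ a j) * algebraMap (symmetricSubalgebra (Fin d) ℤ) A (symSchur d lam)}

theorem span_substaircaseSchurProducts_eq_top {x : Fin n → A} (hn : d ≤ n)
    (hx : Function.Surjective
      (aeval x : MvPolynomial (Fin n) (symmetricSubalgebra (Fin d) ℤ) →ₐ[_] A))
    (h_hsymm : ∀ r : ℕ, m < r →
      algebraMap (symmetricSubalgebra (Fin d) ℤ) A (symHsymm (Fin d) ℤ r) = 0)
    (h_esymm : ∀ r, n - d < r → ∑ j ∈ Finset.range (r + 1), (-1) ^ j *
      (aeval x (esymm (Fin n) (symmetricSubalgebra (Fin d) ℤ) (r - j)) *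
        algebraMap (symmetricSubalgebra (Fin d) ℤ) A (symHsymm (Fin d) ℤ j)) = 0)
    (h_pow : ∀ i, ∑ j ∈ Finset.range (d + 1), (-1) ^ j * (x i ^ (d - j) *
      algebraMap (symmetricSubalgebra (Fin d) ℤ) A (symEsymm (Fin d) ℤ j)) = 0) :
    Submodule.span ℤ (substaircaseSchurProducts d m x) = ⊤ := by
  have h_staircase := span_prod_pow_isSubstaircase_eq_top hx (isNilpotent_map_symEsymmIdeal h_hsymm)
    (fun i => pow_mem_map_symEsymmIdeal (h_pow i)) fun r hr =>
      mem_map_symEsymmIdeal_of_sum_mul_symHsymm_eq_zero (h_esymm r (by omega))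
        (f := fun r => aeval x (esymm (Fin n) _ r))
  have h_span := Submodule.span_smul_of_span_eq_top (span_symSchur_eq_top (d := d))
    ((fun a => ∏ i, x i ^ a i) '' {a | IsSubstaircase n d a})
  rw [h_staircase, Submodule.restrictScalars_top] at h_span
  rw [eq_top_iff, ← h_span, Submodule.span_le]
  rintro _ ⟨_, ⟨lam, hlam, rfl⟩, _, ⟨a, ha, rfl⟩, rfl⟩
  by_cases h_box : ∀ i, lam i ≤ m
  · exact Submodule.subset_span
      ⟨a, ha, lam, hlam, h_box, (Algebra.smul_def _ _).trans (mul_comm _ _)⟩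
  · obtain ⟨i, hi⟩ := not_forall.1 h_box
    simp only [Algebra.smul_def, map_symSchur_eq_zero h_hsymm hlam (not_le.1 hi), zero_mul]
    exact zero_mem _

theorem image_mk_substaircaseSchurProducts (I : Ideal A) (x : Fin n → A) :
    Ideal.Quotient.mk I '' substaircaseSchurProducts d m x =
      substaircaseSchurProducts d m (Ideal.Quotient.mk I ∘ x) := by
  have mk_prod (a : Fin n → ℕ) (q : symmetricSubalgebra (Fin d) ℤ) :
      Ideal.Quotient.mk I ((∏ j, x j ^ a j) * algebraMap _ A q) =
        (∏ j, (Ideal.Quotient.mk I ∘ x) j ^ a j) * algebraMap _ (A ⧸ I) q := by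
    simp only [map_mul, map_prod, map_pow, Function.comp_apply, Ideal.Quotient.mk_algebraMap]
  ext q
  constructor
  · rintro ⟨_, ⟨a, ha, lam, hlam, h_box, rfl⟩, rfl⟩
    exact ⟨a, ha, lam, hlam, h_box, mk_prod a _⟩
  · rintro ⟨a, ha, lam, hlam, h_box, rfl⟩
    exact ⟨_, ⟨a, ha, lam, hlam, h_box, rfl⟩, mk_prod a _⟩

theorem span_image_mk_substaircaseSchurProducts_eq_top {I : Ideal A} {x : Fin n → A} (hn : d ≤ n)
    (hx : Function.Surjective
      (aeval x : MvPolynomial (Fin n) (symmetricSubalgebra (Fin d) ℤ) →ₐ[_] A))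
    (h_hsymm : ∀ r : ℕ, m < r →
      algebraMap (symmetricSubalgebra (Fin d) ℤ) A (symHsymm (Fin d) ℤ r) ∈ I)
    (h_esymm : ∀ r, n - d < r → ∑ j ∈ Finset.range (r + 1), (-1) ^ j *
      (aeval x (esymm (Fin n) (symmetricSubalgebra (Fin d) ℤ) (r - j)) *
        algebraMap (symmetricSubalgebra (Fin d) ℤ) A (symHsymm (Fin d) ℤ j)) ∈ I)
    (h_pow : ∀ i, ∑ j ∈ Finset.range (d + 1), (-1) ^ j * (x i ^ (d - j) *
      algebraMap (symmetricSubalgebra (Fin d) ℤ) A (symEsymm (Fin d) ℤ j)) ∈ I) :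
    Submodule.span ℤ (Ideal.Quotient.mk I '' substaircaseSchurProducts d m x) = ⊤ := by
  rw [image_mk_substaircaseSchurProducts]
  refine span_substaircaseSchurProducts_eq_top hn ?_ (fun r hr => ?_) (fun r hr => ?_) fun i => ?_
  · intro q
    obtain ⟨a, rfl⟩ := Ideal.Quotient.mk_surjective q
    obtain ⟨p, rfl⟩ := hx a
    exact ⟨p, (mk_aeval I x p).symm⟩
  · exact Ideal.Quotient.eq_zero_iff_mem.2 (h_hsymm r hr)
  · simpa only [map_sum, map_mul, map_pow, map_neg, map_one, mk_aeval,
      Ideal.Quotient.mk_algebraMap] using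
      Ideal.Quotient.eq_zero_iff_mem.2 (h_esymm r hr)
  · simpa only [map_sum, map_mul, map_pow, map_neg, map_one, Function.comp_apply,
      Ideal.Quotient.mk_algebraMap] using
      Ideal.Quotient.eq_zero_iff_mem.2 (h_pow i)

end Spanning

section InvariantRing

variable (n d : ℕ)

/-- The variable `x_i`, as an element of the invariant ring. -/
noncomputable def invX (i : Fin n) : invZ2 n d :=
  ⟨X (Sum.inl i), fun g => by rw [rename_X]; rfl⟩

/-- The invariant ring is an algebra over the ring of symmetric polynomials in the `y`-variables. -/
noncomputable instance invZ2.algebraSymmetricSubalgebra :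
    Algebra (symmetricSubalgebra (Fin d) ℤ) (invZ2 n d) :=
  (((rename Sum.inr).comp (symmetricSubalgebra (Fin d) ℤ).val).codRestrict (invZ2 n d)
    fun p g => by
      have h_comp : permY n d g ∘ Sum.inr = Sum.inr ∘ g := rfl
      change rename (permY n d g) (rename Sum.inr (p : MvPolynomial (Fin d) ℤ)) =
        rename Sum.inr (p : MvPolynomial (Fin d) ℤ)
      rw [rename_rename, h_comp, ← rename_rename, p.2 g]).toAlgebra

variable {n d}

theorem coe_algebraMap_invZ2 (p : symmetricSubalgebra (Fin d) ℤ) :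
    (algebraMap (symmetricSubalgebra (Fin d) ℤ) (invZ2 n d) p :
      MvPolynomial (Fin n ⊕ Fin d) ℤ) = rename Sum.inr (p : MvPolynomial (Fin d) ℤ) :=
  rfl

theorem sumAlgEquiv_rename_permY (g : Equiv.Perm (Fin d)) (f : MvPolynomial (Fin n ⊕ Fin d) ℤ) :
    sumAlgEquiv ℤ (Fin n) (Fin d) (rename (permY n d g) f) =
      MvPolynomial.map (rename g).toRingHom (sumAlgEquiv ℤ (Fin n) (Fin d) f) := by
  induction f using MvPolynomial.induction_on with
  | C c => simp
  | add p q hp hq => simp only [map_add, hp, hq]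
  | mul_X p v hp =>
    simp only [map_mul, hp]
    cases v <;> simp [permY]

theorem coe_aeval_invX (p : MvPolynomial (Fin n) (symmetricSubalgebra (Fin d) ℤ)) :
    (aeval (invX n d) p : MvPolynomial (Fin n ⊕ Fin d) ℤ) =
      (sumAlgEquiv ℤ (Fin n) (Fin d)).symm
        (MvPolynomial.map (symmetricSubalgebra (Fin d) ℤ).val.toRingHom p) := by
  have sumAlgEquiv_symm_C (q : MvPolynomial (Fin d) ℤ) :
      (sumAlgEquiv ℤ (Fin n) (Fin d)).symm (C q) = rename Sum.inr q := by
    rw [AlgEquiv.symm_apply_eq]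
    exact (DFunLike.congr_fun (sumAlgEquiv_comp_rename_inr ℤ (Fin n) (Fin d)) q).symm
  induction p using MvPolynomial.induction_on with
  | C c =>
    rw [aeval_C, map_C, sumAlgEquiv_symm_C]
    rfl
  | add p q hp hq => simp only [map_add, AddMemClass.coe_add, hp, hq]
  | mul_X p i hp =>
    simp only [map_mul, MulMemClass.coe_mul, hp, aeval_X, map_X, sumAlgEquiv_symm_X, invX]

theorem aeval_invX_surjective :
    Function.Surjective
      (aeval (invX n d) :
        MvPolynomial (Fin n) (symmetricSubalgebra (Fin d) ℤ) →ₐ[_] invZ2 n d) := by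
  rintro ⟨f, hf⟩
  have h_coeffs : ((sumAlgEquiv ℤ (Fin n) (Fin d) f).coeffs : Set (MvPolynomial (Fin d) ℤ)) ⊆
      Set.range (symmetricSubalgebra (Fin d) ℤ).val.toRingHom := by
    intro c hc
    obtain ⟨s, -, rfl⟩ := mem_coeffs_iff.1 hc
    refine ⟨⟨_, fun g => ?_⟩, rfl⟩
    have h_map := sumAlgEquiv_rename_permY g f
    rw [hf g] at h_map
    exact (coeff_map _ _ s).symm.trans (congrArg (coeff s) h_map.symm)
  obtain ⟨p, hp⟩ := mem_range_map_iff_coeffs_subset.2 h_coeffs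
  refine ⟨p, Subtype.ext ?_⟩
  rw [coe_aeval_invX, hp, AlgEquiv.symm_apply_apply]

theorem coe_aeval_invX_esymm (r : ℕ) :
    (aeval (invX n d) (esymm (Fin n) (symmetricSubalgebra (Fin d) ℤ) r) :
      MvPolynomial (Fin n ⊕ Fin d) ℤ) = eXZ n d r := by
  simp only [eXZ, esymm, map_sum, map_prod, aeval_X, rename_X]
  push_cast
  rfl

theorem algebraMap_symHsymm_mem_preimage_GgensZ {k r : ℕ} (hr : k - d < r) :
    algebraMap _ (invZ2 n d) (symHsymm (Fin d) ℤ r) ∈ Subtype.val ⁻¹' GgensZ n k d :=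
  Or.inl <| Or.inl ⟨r, hr, by rw [coe_algebraMap_invZ2, coe_symHsymm_natCast, hYZ]⟩

theorem sum_aeval_invX_esymm_mul_symHsymm_mem_preimage_GgensZ {k r : ℕ} (hr : n - d < r) :
    ∑ j ∈ Finset.range (r + 1), (-1) ^ j *
      (aeval (invX n d) (esymm (Fin n) (symmetricSubalgebra (Fin d) ℤ) (r - j)) *
        algebraMap _ (invZ2 n d) (symHsymm (Fin d) ℤ j)) ∈ Subtype.val ⁻¹' GgensZ n k d := by
  refine Or.inl (Or.inr ⟨r, hr, ?_⟩)
  push_cast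
  simp only [coe_aeval_invX_esymm, coe_algebraMap_invZ2, coe_symHsymm_natCast, genXYZ, hYZ]

theorem sum_invX_pow_mul_symEsymm_mem_preimage_GgensZ {k : ℕ} (i : Fin n) :
    ∑ j ∈ Finset.range (d + 1), (-1) ^ j *
      (invX n d i ^ (d - j) * algebraMap _ (invZ2 n d) (symEsymm (Fin d) ℤ j)) ∈
        Subtype.val ⁻¹' GgensZ n k d := by
  refine Or.inr ⟨i, ?_⟩
  push_cast
  simp only [coe_algebraMap_invZ2, genPowZ, eYZ]
  rfl

theorem preimage_CsetZ (m : ℕ) :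
    Subtype.val ⁻¹' CsetZ n (m + d) d = substaircaseSchurProducts d m (invX n d) := by
  have coe_prod (a : Fin n → ℕ) (lam : Fin d → ℕ) :
      (((∏ j, invX n d j ^ a j) * algebraMap _ (invZ2 n d) (symSchur d lam) : invZ2 n d) :
          MvPolynomial (Fin n ⊕ Fin d) ℤ) =
        (∏ j, X (Sum.inl j) ^ a j) * rename Sum.inr (schurPoly d lam) := by
    push_cast
    rw [coe_algebraMap_invZ2, coe_symSchur]
    rfl
  ext p
  simp only [Set.mem_preimage, CsetZ, substaircaseSchurProducts, Set.mem_ofPred_eq,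
    Nat.add_sub_cancel, ← coe_prod, Subtype.coe_inj]

end InvariantRing

/-- The parameter `k` is written `m + d`, so that `k - d` is never truncated. -/
theorem CsetZ_spans_general (n m d : ℕ) (hn : d ≤ n) :
    Submodule.span ℤ
      (⇑(Ideal.Quotient.mk (Ideal.span (Subtype.val ⁻¹' GgensZ n (m + d) d : Set ↥(invZ2 n d)))) ''
        (Subtype.val ⁻¹' CsetZ n (m + d) d)) = ⊤ := by
  rw [preimage_CsetZ]
  exact span_image_mk_substaircaseSchurProducts_eq_top hn aeval_invX_surjective
    (fun r hr => Ideal.subset_span (algebraMap_symHsymm_mem_preimage_GgensZ (by simpa using hr)))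
    (fun r hr => Ideal.subset_span (sum_aeval_invX_esymm_mul_symHsymm_mem_preimage_GgensZ hr))
    fun i => Ideal.subset_span (sum_invX_pow_mul_symEsymm_mem_preimage_GgensZ i)

/-- The quotient `ℤ[x,y]^{S_d}/(ℤ[x,y]^{S_d}·G)` is spanned over `ℤ`
by the images of the elements of `C_{n,k,d}`. -/
theorem CsetZ_spans (n k d : ℕ) (hd : 1 ≤ d) (hk : d ≤ k) (hn : k ≤ n) :
    Submodule.span ℤ
      (⇑(Ideal.Quotient.mk (Ideal.span (Subtype.val ⁻¹' GgensZ n k d : Set ↥(invZ2 n d)))) ''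
        (Subtype.val ⁻¹' CsetZ n k d)) = ⊤ := by
  obtain ⟨m, rfl⟩ := Nat.exists_eq_add_of_le' hk
  exact CsetZ_spans_general n m d (hk.trans hn)
end

section
/- For integers n ≥ k ≥ d ≥ 1, the set G generates the ideal J_{n,k,d} ∩ ℤ[x_1,…,x_n,y_1,…,y_d]^{S_d} as an ideal of the invariant ring ℤ[x_1,…,x_n,y_1,…,y_d]^{S_d}; moreover, the set C_{n,k,d} descends to a ℤ-module basis of ℤ[x_1,…,x_n,y_1,…,y_d]^{S_d}/(J_{n,k,d} ∩ ℤ[x_1,…,x_n,y_1,…,y_d]^{S_d}). -/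
open MvPolynomial

set_option synthInstance.maxHeartbeats 1000000
set_option maxHeartbeats 4000000

/-!
The divided difference of the longest permutation is linear over the invariants and sends `y^δ`
to `1`, so `p ↦ ∂(p y^δ)` retracts the polynomial ring onto the invariants, and `J` contracts to
the ideal generated by `G` among the invariants.

Modulo that ideal `C` spans: peeling off the last variable `x_n`, a root of `∏ (T - y_j)` that may
or may not be needed to exhaust the roots, reduces the exponents to the substaircase ones, and the
linear recurrence of the complete homogeneous polynomials bounds the parts of the partitions.

For independence, deform the first family of relations to say that the `y_j` are among given
integers `α_1, …, α_k`. The deformed relations hold at every point where the `y_j` are distinct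
`α`'s and the `x_i` run through all of these `y_j`. There are as many such points as elements of
`C`, and `C` still spans the restrictions of the invariants to them, so it is independent there.
With `α_i = N i` the deformation is trivial modulo `N`, hence `N` divides the coefficients of every
relation modulo `G`, for every `N > 0`.
-/

namespace SpanningLine

section GeneratingFunctions

variable {A B ι : Type*} [CommRing A] [CommRing B]

theorem natDegree_prod_one_sub_le (s : Finset ι) (z : ι → A) :
    (∏ i ∈ s, (1 - Polynomial.C (z i) * Polynomial.X)).natDegree ≤ s.card := by
  refine (Polynomial.natDegree_prod_le _ _).trans ?_
  rw [Finset.card_eq_sum_ones]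
  exact Finset.sum_le_sum fun i _ => by compute_degree

variable [Fintype ι]

/-- The polynomial `∏ (1 - z_i T)`, the reflection of `∏ (T - z_i)`; it generates the signed
elementary symmetric functions of `z`. -/
noncomputable def revProd (z : ι → A) : Polynomial A :=
  ∏ i, (1 - Polynomial.C (z i) * Polynomial.X)

/-- The generating series `∑ h_r(y) T^r` of the complete homogeneous symmetric functions of `y`. -/
noncomputable def hsymmSeries (y : ι → A) [DecidableEq ι] : PowerSeries A :=
  PowerSeries.mk fun r => aeval y (hsymm ι ℤ r)

theorem map_revProd (f : A →+* B) (z : ι → A) :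
    (revProd z).map f = revProd (f ∘ z) := by
  simp [revProd, Polynomial.map_prod]

theorem reflect_revProd (z : ι → A) :
    (revProd z).reflect (Fintype.card ι) = ∏ i, (Polynomial.X - Polynomial.C (z i)) := by
  classical
  suffices h : ∀ s : Finset ι, Polynomial.reflect s.card
      (∏ i ∈ s, (1 - Polynomial.C (z i) * Polynomial.X)) =
        ∏ i ∈ s, (Polynomial.X - Polynomial.C (z i)) from h Finset.univ
  intro s
  induction s using Finset.induction_on with
  | empty => simp
  | insert i s hi ih =>
    have hlin : (1 - Polynomial.C (z i) * Polynomial.X).reflect 1 =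
        Polynomial.X - Polynomial.C (z i) := by
      have := Polynomial.reflect_C_mul_X_pow 1 1 (c := z i)
      rw [pow_one] at this
      simp [Polynomial.reflect_sub, this]
    rw [Finset.prod_insert hi, Finset.prod_insert hi, Finset.card_insert_of_notMem hi, add_comm,
      Polynomial.reflect_mul _ _ (by compute_degree) (natDegree_prod_one_sub_le s z), hlin, ih]

theorem reflect_prod_X_sub_C (z : ι → A) :
    (∏ i, (Polynomial.X - Polynomial.C (z i))).reflect (Fintype.card ι) = revProd z := by
  rw [← reflect_revProd, Polynomial.reflect_reflect]

theorem coeff_revProd (z : ι → A) (r : ℕ) :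
    (revProd z).coeff r = (-1) ^ r * aeval z (esymm ι ℤ r) := by
  have hmon : ∀ i, (1 - Polynomial.C (z i) * Polynomial.X) =
      1 + Polynomial.C (-z i) * Polynomial.X := fun i => by simp [sub_eq_add_neg]
  simp_rw [revProd, hmon, Finset.prod_one_add, Finset.prod_mul_distrib, Finset.prod_const,
    ← map_prod, Polynomial.finsetSum_coeff, Polynomial.coeff_C_mul_X_pow, esymm, map_sum, map_prod,
    aeval_X, Finset.mul_sum, Finset.powersetCard_eq_filter, Finset.sum_filter]
  refine Finset.sum_congr rfl fun t _ => ?_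
  by_cases h : t.card = r
  · simp [h, Finset.prod_neg]
  · simp [h, Ne.symm h]

theorem mk_pow_mul_one_sub (c : A) :
    PowerSeries.mk (fun m => c ^ m) * (1 - PowerSeries.C c * PowerSeries.X) = 1 := by
  ext (_ | m)
  · simp [mul_sub, ← mul_assoc]
  · simp [mul_sub, ← mul_assoc, PowerSeries.coeff_succ_mul_X, PowerSeries.coeff_one, pow_succ]

variable [DecidableEq ι]

theorem hsymmSeries_eq_prod (y : ι → A) :
    hsymmSeries y = ∏ i, PowerSeries.mk fun m => y i ^ m := by
  ext r
  rw [PowerSeries.coeff_prod]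
  simp only [hsymmSeries, PowerSeries.coeff_mk, hsymm, map_sum]
  refine Finset.sum_bij' (fun s _ => Multiset.toFinsupp s.1)
    (fun l hl => ⟨Finsupp.toMultiset l, ?_⟩) (fun s _ => ?_) (fun l _ => Finset.mem_univ _)
    (fun s _ => Subtype.ext (by simp)) (fun l _ => by simp) (fun s _ => ?_)
  · rw [Finset.mem_finsuppAntidiag] at hl
    rw [Finsupp.card_toMultiset, Finsupp.sum_fintype _ _ (by simp)]
    exact hl.1
  · rw [Finset.mem_finsuppAntidiag]
    exact ⟨(Multiset.sum_count_eq_card fun i _ => Finset.mem_univ i).trans s.2,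
      Finset.subset_univ _⟩
  · rw [Finset.prod_multiset_map_count, map_prod]
    simp only [map_pow, aeval_X, Multiset.toFinsupp_apply]
    refine Finset.prod_subset (Finset.subset_univ _) fun i _ hi => ?_
    rw [Multiset.mem_toFinset, ← Multiset.count_eq_zero] at hi
    rw [hi, pow_zero]

theorem hsymmSeries_mul_revProd (y : ι → A) : hsymmSeries y * (revProd y : PowerSeries A) = 1 := by
  rw [hsymmSeries_eq_prod, revProd, ← Polynomial.coeToPowerSeries.ringHom_apply, map_prod,
    ← Finset.prod_mul_distrib]
  simp [mk_pow_mul_one_sub]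

/-- The numerator `∏ (1 - z_i T)` absorbs the denominator `∏ (1 - y_j T)` of the series of `y`. -/
theorem coeff_revProd_mul_hsymmSeries {κ : Type*} [Fintype κ] (z : κ → A) {φ : ι → κ}
    (hφ : Function.Injective φ) {r : ℕ} (hr : Fintype.card κ - Fintype.card ι < r) :
    PowerSeries.coeff r ((revProd z : PowerSeries A) * hsymmSeries (z ∘ φ)) = 0 := by
  classical
  have hsplit : revProd z = revProd (z ∘ φ) *
      ∏ i ∈ (Finset.univ.image φ)ᶜ, (1 - Polynomial.C (z i) * Polynomial.X) := by
    rw [revProd, ← Finset.prod_mul_prod_compl (Finset.univ.image φ),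
      Finset.prod_image fun a _ b _ h => hφ h]
    rfl
  rw [hsplit, Polynomial.coe_mul, mul_comm, ← mul_assoc, hsymmSeries_mul_revProd, one_mul,
    Polynomial.coeff_coe]
  refine Polynomial.coeff_eq_zero_of_natDegree_lt
    ((natDegree_prod_one_sub_le _ _).trans_lt ?_)
  rwa [Finset.card_compl, Finset.card_image_of_injective _ hφ]

theorem reflect_dvd_reflect {n d : ℕ} (hdn : d ≤ n) {p q : Polynomial A} (hq : q.natDegree ≤ d)
    {H : PowerSeries A} (hH : H * (q : PowerSeries A) = 1)
    (hv : ∀ r, n - d < r → PowerSeries.coeff r ((p : PowerSeries A) * H) = 0) :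
    q.reflect d ∣ p.reflect n := by
  set t := PowerSeries.trunc (n - d + 1) ((p : PowerSeries A) * H) with ht
  have ht_coe : (t : PowerSeries A) = (p : PowerSeries A) * H := by
    ext r
    rw [Polynomial.coeff_coe, ht, PowerSeries.coeff_trunc]
    split_ifs with hr
    · rfl
    · rw [hv r (by omega)]
  have ht_deg : t.natDegree ≤ n - d :=
    Nat.lt_succ_iff.mp (PowerSeries.natDegree_trunc_lt ((p : PowerSeries A) * H) (n - d))
  have hp : p = t * q := by
    apply Polynomial.coe_injective
    rw [Polynomial.coe_mul, ht_coe, mul_assoc, hH, mul_one]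
  have hmul := Polynomial.reflect_mul t q ht_deg hq
  rw [Nat.sub_add_cancel hdn] at hmul
  exact ⟨t.reflect (n - d), by rw [hp, hmul, mul_comm]⟩

end GeneratingFunctions

section JacobiTrudi

theorem eq_sum_coeff_modByMonic_smul {R M : Type*} [CommRing R] [Nontrivial R] [AddCommGroup M]
    [Module R M] {P : Polynomial R} (hP : P.Monic) {u : ℕ → M}
    (hu : ∀ m, ∑ i ∈ Finset.range (P.natDegree + 1), P.coeff i • u (m + i) = 0) (m : ℕ) :
    u m = ∑ i : Fin P.natDegree, (Polynomial.X ^ m %ₘ P).coeff i • u i := by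
  set L : Polynomial R →ₗ[R] M := Polynomial.lsum fun i => LinearMap.toSpanSingleton R M (u i)
  have hL (q : Polynomial R) : L q = q.sum fun i c => c • u i := rfl
  have hLX (i : ℕ) : L (Polynomial.X ^ i) = u i := by
    rw [hL, Polynomial.X_pow_eq_monomial, Polynomial.sum_monomial_index _ _ (zero_smul R _),
      one_smul]
  have hLP (m : ℕ) : L (P * Polynomial.X ^ m) = 0 := by
    conv_lhs => rw [P.as_sum_range_C_mul_X_pow, Finset.sum_mul, map_sum]
    rw [← hu m]
    refine Finset.sum_congr rfl fun i _ => ?_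
    rw [mul_assoc, ← Polynomial.smul_eq_C_mul, map_smul, ← pow_add, hLX, add_comm]
  have hLmul (q : Polynomial R) : L (P * q) = 0 := by
    induction q using Polynomial.induction_on' with
    | add q r hq hr => rw [mul_add, map_add, hq, hr, add_zero]
    | monomial j c =>
      rw [← Polynomial.C_mul_X_pow_eq_monomial, mul_left_comm, ← Polynomial.smul_eq_C_mul,
        map_smul, hLP, smul_zero]
  rw [← hLX m, ← Polynomial.modByMonic_add_div (Polynomial.X ^ m) P, map_add, hLmul, add_zero, hL,
    Polynomial.modByMonic_add_div]
  exact (Polynomial.sum_fin (fun i c => c • u i) (fun i => zero_smul R _)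
    ((Polynomial.degree_modByMonic_lt _ hP).trans_eq
      (Polynomial.degree_eq_natDegree hP.ne_zero))).symm

variable {R A B : Type*} [CommRing R] [CommRing A] [CommRing B]

/-- The extension by zero of a sequence to integer indices. -/
def extendZero (h : ℕ → A) (m : ℤ) : A := if 0 ≤ m then h m.toNat else 0

theorem coeff_mul_mk_eq_sum_extendZero (h : ℕ → A) {q : Polynomial A} {K : ℕ}
    (hq : q.natDegree ≤ K) (M : ℕ) :
    PowerSeries.coeff M ((q : PowerSeries A) * PowerSeries.mk h) =
      ∑ a ∈ Finset.range (K + 1), q.coeff a * extendZero h ((M : ℤ) - a) := by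
  conv_lhs => rw [q.as_sum_range_C_mul_X_pow' (Nat.lt_succ_of_le hq),
    ← Polynomial.coeToPowerSeries.ringHom_apply, map_sum, Finset.sum_mul, map_sum]
  refine Finset.sum_congr rfl fun a _ => ?_
  rw [Polynomial.coeToPowerSeries.ringHom_apply, Polynomial.coe_mul, Polynomial.coe_C,
    Polynomial.coe_pow, Polynomial.coe_X, mul_assoc, PowerSeries.coeff_C_mul,
    PowerSeries.coeff_X_pow_mul', PowerSeries.coeff_mk, extendZero]
  congr 1
  by_cases ha : a ≤ M
  · rw [if_pos ha, if_pos (by omega)]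
    congr 1
    omega
  · rw [if_neg ha, if_neg (by omega)]

/-- The row `(h_{m-(d-1)}, …, h_m)` of a Jacobi–Trudi matrix. -/
def jacobiTrudiRow (d : ℕ) (h : ℕ → A) (m : ℕ) : Fin d → A :=
  fun j => extendZero h ((m : ℤ) - ((d : ℤ) - 1) + (j : ℕ))

/-- The Jacobi–Trudi determinant with rows indexed by the beta numbers `β i = λ i + (d - 1 - i)`
of a partition `λ`, which makes sense for every sequence `β`. -/
def jacobiTrudi {d : ℕ} (h : ℕ → A) (β : Fin d → ℕ) : A :=
  (Matrix.of fun i => jacobiTrudiRow d h (β i)).det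

/-- The beta numbers `(d - 1, …, 1, 0)` of the empty partition. -/
def emptyBeta (d : ℕ) (i : Fin d) : ℕ := d - 1 - i

theorem map_jacobiTrudi (f : A →+* B) {d : ℕ} (h : ℕ → A) (β : Fin d → ℕ) :
    f (jacobiTrudi h β) = jacobiTrudi (f ∘ h) β := by
  rw [jacobiTrudi, RingHom.map_det, jacobiTrudi]
  congr 1
  ext i j
  simp [jacobiTrudiRow, extendZero, apply_ite f]

theorem sum_coeff_smul_jacobiTrudiRow [Algebra R A] {d : ℕ} {P : Polynomial R}
    (hd : d ≤ P.natDegree) {h : ℕ → A}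
    (hv : ∀ r, P.natDegree - d < r → PowerSeries.coeff r
      (((P.reflect P.natDegree).map (algebraMap R A) : PowerSeries A) * PowerSeries.mk h) = 0)
    (m : ℕ) :
    ∑ i ∈ Finset.range (P.natDegree + 1), P.coeff i • jacobiTrudiRow d h (m + i) = 0 := by
  set K := P.natDegree with hK
  have hdeg : ((P.reflect K).map (algebraMap R A)).natDegree ≤ K :=
    Polynomial.natDegree_map_le.trans (P.natDegree_reflect_le.trans (by simp [hK]))
  ext j
  rw [Finset.sum_apply, Pi.zero_apply, ← hv (m + (K - d) + 1 + j) (by omega),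
    coeff_mul_mk_eq_sum_extendZero h hdeg, ← Finset.sum_range_reflect]
  refine Finset.sum_congr rfl fun a ha => ?_
  have ha : a ≤ K := Nat.lt_succ_iff.mp (Finset.mem_range.mp ha)
  rw [Polynomial.coeff_map, Polynomial.coeff_reflect, Polynomial.revAt_le ha, Pi.smul_apply,
    Algebra.smul_def, jacobiTrudiRow, Nat.add_sub_cancel]
  congr 2
  push_cast [Nat.cast_sub ha, Nat.cast_sub hd]
  ring

theorem jacobiTrudi_emptyBeta {d : ℕ} {h : ℕ → A} (h0 : h 0 = 1) :
    jacobiTrudi h (emptyBeta d) = 1 := by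
  have hindex (i : Fin d) : ((emptyBeta d i : ℕ) : ℤ) - ((d : ℤ) - 1) = -(i : ℕ) := by
    rw [emptyBeta]
    omega
  rw [jacobiTrudi, Matrix.det_of_isUpperTriangular]
  · refine Finset.prod_eq_one fun i _ => ?_
    simp [jacobiTrudiRow, hindex, extendZero, h0]
  · intro i j hij
    have hij : (j : ℕ) < i := hij
    simp only [Matrix.of_apply, jacobiTrudiRow, hindex, extendZero]
    exact if_neg (by omega)

/-- The alternant `det (y_j ^ β_i)`. -/
def alternant {d : ℕ} (y : Fin d → A) (β : Fin d → ℕ) : A := (Matrix.of fun i j => y j ^ β i).det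

theorem of_eq_mul_of_recurrence [Nontrivial A] {d : ℕ} {P : Polynomial A} (hP : P.Monic)
    (hdeg : P.natDegree = d) (β : Fin d → ℕ) {u : ℕ → Fin d → A}
    (hu : ∀ m, ∑ i ∈ Finset.range (P.natDegree + 1), P.coeff i • u (m + i) = 0) :
    Matrix.of (fun i => u (β i)) =
      Matrix.of (fun i l : Fin d => (Polynomial.X ^ β i %ₘ P).coeff (emptyBeta d l)) *
        Matrix.of fun i => u (emptyBeta d i) := by
  ext i j
  rw [Matrix.of_apply, eq_sum_coeff_modByMonic_smul hP hu, hdeg, Matrix.mul_apply,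
    ← Equiv.sum_comp Fin.revPerm, Finset.sum_apply]
  refine Finset.sum_congr rfl fun l _ => ?_
  have hl : d - ((l : ℕ) + 1) = d - 1 - l := by omega
  simp [emptyBeta, Fin.val_rev, hl]

/-- The bialternant formula. Both the powers of the `y_j` and the rows of the Jacobi–Trudi matrix
obey the linear recurrence with characteristic polynomial `∏ (T - y_j)`, so both determinants
acquire the same factor when the beta numbers of the empty partition are replaced by `β`. -/
theorem alternant_eq_jacobiTrudi_mul [Nontrivial A] {d : ℕ} (y : Fin d → A) (β : Fin d → ℕ) :
    alternant y β =
      jacobiTrudi (fun r => aeval y (hsymm (Fin d) ℤ r)) β * alternant y (emptyBeta d) := by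
  set h : ℕ → A := fun r => aeval y (hsymm (Fin d) ℤ r)
  set P : Polynomial A := ∏ j, (Polynomial.X - Polynomial.C (y j)) with hP_def
  have hP : P.Monic := Polynomial.monic_prod_X_sub_C y Finset.univ
  have hdeg : P.natDegree = d := by simp [P]
  have hreflect : P.reflect d = revProd y := by
    simpa [P] using congrArg (Polynomial.reflect d) (reflect_revProd y).symm
  have hroot (j : Fin d) : P.eval (y j) = 0 := by
    rw [hP_def, Polynomial.eval_prod]
    exact Finset.prod_eq_zero (Finset.mem_univ j) (by simp)
  have hrow := of_eq_mul_of_recurrence hP hdeg β (u := jacobiTrudiRow d h) <|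
    sum_coeff_smul_jacobiTrudiRow hdeg.ge fun r hr => by
      have hone := congrArg (PowerSeries.coeff r) (hsymmSeries_mul_revProd y)
      rw [hdeg, hreflect, Algebra.algebraMap_self, Polynomial.map_id, mul_comm]
      rwa [PowerSeries.coeff_one, if_neg (by omega)] at hone
  have hpow := of_eq_mul_of_recurrence hP hdeg β (u := fun m j => y j ^ m) fun m => by
    ext j
    simp [pow_add, mul_left_comm _ (y j ^ m), ← Finset.mul_sum, ← Polynomial.eval_eq_sum_range,
      hroot]
  have hempty := jacobiTrudi_emptyBeta (d := d) (h := h) (by simp [h])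
  rw [jacobiTrudi] at hempty
  rw [alternant, hpow, Matrix.det_mul, jacobiTrudi, hrow, Matrix.det_mul, hempty, mul_one,
    alternant]

end JacobiTrudi

section DividedDifference

theorem comap_map_eq_self_of_linear_retraction {R S : Type*} [CommRing R] [CommRing S] [Algebra R S]
    (ρ : S →ₗ[R] R) (hρ : ∀ r, ρ (algebraMap R S r) = r) (I : Ideal R) :
    (I.map (algebraMap R S)).comap (algebraMap R S) = I := by
  refine le_antisymm (fun r hr => ?_) Ideal.le_comap_map
  have hmem : algebraMap R S r ∈ I • (⊤ : Submodule R S) := by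
    rw [Ideal.smul_top_eq_map]
    exact hr
  have hmap := Submodule.mem_map_of_mem (f := ρ) hmem
  rw [hρ, Submodule.map_smul''] at hmap
  exact Ideal.mul_le_left (I := I) hmap

variable (n d : ℕ)

/-- The complete homogeneous symmetric polynomial `h_r` in the ring of symmetric polynomials. -/
noncomputable def hSym (r : ℕ) : symmetricSubalgebra (Fin d) ℤ :=
  ⟨hsymm (Fin d) ℤ r, hsymm_isSymmetric _ _ r⟩

/-- The Schur polynomial with beta numbers `β` in the ring of symmetric polynomials. -/
noncomputable def schurSym {d : ℕ} (β : Fin d → ℕ) : symmetricSubalgebra (Fin d) ℤ :=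
  jacobiTrudi (hSym d) β

/-- The variable `x_i` as an `S_d`-invariant. -/
noncomputable def xInv (i : Fin n) : invZ2 n d :=
  ⟨X (Sum.inl i), fun g => by simp [permY]⟩

/-- The inclusion of the symmetric polynomials in the `y`-variables into the `S_d`-invariants. -/
noncomputable def symInv : symmetricSubalgebra (Fin d) ℤ →ₐ[ℤ] invZ2 n d :=
  ((rename Sum.inr).comp (symmetricSubalgebra (Fin d) ℤ).val).codRestrict _ fun p g => by
    have hcomp : permY n d g ∘ Sum.inr = Sum.inr ∘ g := by ext; simp [permY]
    simp only [AlgHom.comp_apply, Subalgebra.coe_val]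
    rw [rename_rename, hcomp, ← rename_rename, p.2 g]

/-- The invariant `x^a s(y)`, where `s` is the Schur polynomial with beta numbers `β`. -/
noncomputable def schurMonomial {n d : ℕ} (a : Fin n → ℕ) (β : Fin d → ℕ) : invZ2 n d :=
  (∏ i, xInv n d i ^ a i) * symInv n d (schurSym β)

/-- The Weyl denominator `∏ (y_i - y_j)` as a determinant. -/
noncomputable def weylDenominator : MvPolynomial (Fin n ⊕ Fin d) ℤ :=
  alternant (fun j : Fin d => X (Sum.inr j)) (emptyBeta d)

/-- The antisymmetrization `∑ sign(σ) σ(p)` over the permutations of the `y`-variables. -/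
noncomputable def antisymmetrize :
    MvPolynomial (Fin n ⊕ Fin d) ℤ →ₗ[ℤ] MvPolynomial (Fin n ⊕ Fin d) ℤ :=
  ∑ σ : Equiv.Perm (Fin d), (Equiv.Perm.sign σ : ℤ) • (rename (permY n d σ)).toLinearMap

/-- The divided difference operator of the longest permutation of the `y`-variables, defined by
its values on monomials. -/
noncomputable def dividedDifference : MvPolynomial (Fin n ⊕ Fin d) ℤ →ₗ[ℤ] invZ2 n d :=
  (basisMonomials _ ℤ).constr ℤ fun m => schurMonomial (m ∘ Sum.inl) (m ∘ Sum.inr)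

/-- The monomial `y^δ`, where `δ = (d - 1, …, 1, 0)`. -/
noncomputable def yDelta : MvPolynomial (Fin d) ℤ := ∏ j, X j ^ emptyBeta d j

variable {n d}

theorem weylDenominator_ne_zero : weylDenominator n d ≠ 0 := by
  set y : Fin d → MvPolynomial (Fin n ⊕ Fin d) ℤ := fun j => X (Sum.inr j)
  have hvandermonde : weylDenominator n d =
      ((Matrix.vandermonde y).transpose.submatrix Fin.revPerm id).det := by
    rw [weylDenominator, alternant]
    congr 1
    ext i j
    simp only [emptyBeta, Matrix.of_apply, Matrix.submatrix_apply, Matrix.transpose_apply,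
      Matrix.vandermonde_apply, id, Fin.revPerm_apply, Fin.val_rev, y]
    congr 2
    omega
  rw [hvandermonde, Matrix.det_permute, Matrix.det_transpose]
  refine mul_ne_zero (mod_cast Units.ne_zero _) (Matrix.det_vandermonde_ne_zero_iff.mpr ?_)
  exact fun i j hij => Sum.inr_injective (X_injective hij)

theorem antisymmetrize_apply (p : MvPolynomial (Fin n ⊕ Fin d) ℤ) :
    antisymmetrize n d p =
      ∑ σ : Equiv.Perm (Fin d), (Equiv.Perm.sign σ : ℤ) • rename (permY n d σ) p := by
  simp [antisymmetrize]

theorem antisymmetrize_mul (r : invZ2 n d) (p : MvPolynomial (Fin n ⊕ Fin d) ℤ) :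
    antisymmetrize n d (r * p) = r * antisymmetrize n d p := by
  simp_rw [antisymmetrize_apply, Finset.mul_sum, map_mul, r.2 _, mul_smul_comm]

theorem alternant_X_eq_mul_weylDenominator (β : Fin d → ℕ) :
    alternant (fun j => X (Sum.inr j)) β =
      (symInv n d (schurSym β) : MvPolynomial (Fin n ⊕ Fin d) ℤ) * weylDenominator n d := by
  have hmap := map_jacobiTrudi ((invZ2 n d).val.comp (symInv n d)).toRingHom (hSym d) β
  refine (alternant_eq_jacobiTrudi_mul _ β).trans (congrArg (· * _) (Eq.trans ?_ hmap.symm))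
  congr 1
  ext1 r
  exact (DFunLike.congr_fun (rename_eq_aeval Sum.inr) (hsymm (Fin d) ℤ r)).symm

theorem monomial_one_eq_prod (m : Fin n ⊕ Fin d →₀ ℕ) :
    (monomial m 1 : MvPolynomial (Fin n ⊕ Fin d) ℤ) =
      (∏ i, X (Sum.inl i) ^ m (Sum.inl i)) * ∏ j, X (Sum.inr j) ^ m (Sum.inr j) := by
  rw [monomial_eq, Finsupp.prod_fintype _ _ (by simp), Fintype.prod_sum_type, map_one, one_mul]

theorem antisymmetrize_monomial (m : Fin n ⊕ Fin d →₀ ℕ) :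
    antisymmetrize n d (monomial m 1) = weylDenominator n d *
      (schurMonomial (m ∘ Sum.inl) (m ∘ Sum.inr) : invZ2 n d) := by
  have hx : ((∏ i, xInv n d i ^ m (Sum.inl i) : invZ2 n d) :
      MvPolynomial (Fin n ⊕ Fin d) ℤ) = ∏ i, X (Sum.inl i) ^ m (Sum.inl i) := by
    push_cast
    rfl
  have halt := alternant_X_eq_mul_weylDenominator (n := n) (m ∘ Sum.inr)
  rw [alternant, ← Matrix.det_transpose, Matrix.det_apply'] at halt
  rw [monomial_one_eq_prod, ← hx, antisymmetrize_mul, schurMonomial, MulMemClass.coe_mul,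
    mul_left_comm, mul_comm (weylDenominator n d), ← halt, antisymmetrize_apply]
  simp only [Function.comp_apply]
  congr 1
  refine Finset.sum_congr rfl fun σ _ => ?_
  simp [permY]

theorem dividedDifference_monomial (m : Fin n ⊕ Fin d →₀ ℕ) :
    dividedDifference n d (monomial m 1) = schurMonomial (m ∘ Sum.inl) (m ∘ Sum.inr) := by
  simpa [dividedDifference] using (basisMonomials _ ℤ).constr_basis ℤ
    (fun m : Fin n ⊕ Fin d →₀ ℕ => (schurMonomial (m ∘ Sum.inl) (m ∘ Sum.inr) : invZ2 n d)) m

theorem antisymmetrize_eq_weylDenominator_mul (p : MvPolynomial (Fin n ⊕ Fin d) ℤ) :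
    antisymmetrize n d p = weylDenominator n d * dividedDifference n d p := by
  suffices h : antisymmetrize n d = (LinearMap.mulLeft ℤ (weylDenominator n d)).comp
      ((invZ2 n d).val.toLinearMap.comp (dividedDifference n d)) from LinearMap.congr_fun h p
  refine (basisMonomials _ ℤ).ext fun m => ?_
  simp [dividedDifference_monomial, antisymmetrize_monomial]

theorem dividedDifference_mul (r : invZ2 n d) (p : MvPolynomial (Fin n ⊕ Fin d) ℤ) :
    dividedDifference n d (r * p) = r * dividedDifference n d p := by
  refine Subtype.ext (mul_left_cancel₀ weylDenominator_ne_zero ?_)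
  rw [← antisymmetrize_eq_weylDenominator_mul, antisymmetrize_mul,
    antisymmetrize_eq_weylDenominator_mul, MulMemClass.coe_mul, mul_left_comm]

theorem dividedDifference_yDelta :
    dividedDifference n d (rename Sum.inr (yDelta d)) = (1 : invZ2 n d) := by
  have hmon : (rename Sum.inr (yDelta d) : MvPolynomial (Fin n ⊕ Fin d) ℤ) =
      monomial (Finsupp.equivFunOnFinite.symm (Sum.elim (0 : Fin n → ℕ) (emptyBeta d))) 1 := by
    simp [monomial_one_eq_prod, yDelta]
  rw [hmon, dividedDifference_monomial, Finsupp.coe_equivFunOnFinite_symm, Sum.elim_comp_inl,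
    Sum.elim_comp_inr, schurMonomial, schurSym,
    jacobiTrudi_emptyBeta (Subtype.ext (by simp [hSym]))]
  simp

theorem dividedDifference_mul_yDelta (r : invZ2 n d) :
    dividedDifference n d ((r : MvPolynomial (Fin n ⊕ Fin d) ℤ) * rename Sum.inr (yDelta d)) =
      r := by
  rw [dividedDifference_mul, dividedDifference_yDelta, mul_one]

theorem comap_span_val_image (G : Set (invZ2 n d)) :
    (Ideal.span (Subtype.val '' G)).comap (invZ2 n d).val = Ideal.span G := by
  have h := comap_map_eq_self_of_linear_retraction (S := MvPolynomial (Fin n ⊕ Fin d) ℤ)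
    { toFun := fun p => dividedDifference n d (p * rename Sum.inr (yDelta d))
      map_add' := fun p q => by rw [add_mul, map_add]
      map_smul' := fun r p => by
        rw [Subalgebra.smul_def, smul_mul_assoc, smul_eq_mul, dividedDifference_mul]
        rfl }
    dividedDifference_mul_yDelta (Ideal.span G)
  rwa [Ideal.map_span] at h

theorem span_range_schurMonomial :
    Submodule.span ℤ (Set.range fun p : (Fin n → ℕ) × (Fin d → ℕ) =>
      schurMonomial p.1 p.2) = ⊤ := by
  rw [eq_top_iff]
  intro r _
  rw [← dividedDifference_mul_yDelta r]
  generalize (r : MvPolynomial (Fin n ⊕ Fin d) ℤ) * rename Sum.inr (yDelta d) = p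
  have hp : p ∈ Submodule.span ℤ (Set.range fun m => monomial m (1 : ℤ)) := by
    rw [← coe_basisMonomials, Module.Basis.span_eq]
    trivial
  induction hp using Submodule.span_induction with
  | mem p hp =>
    obtain ⟨m, rfl⟩ := hp
    exact Submodule.subset_span ⟨(_, _), (dividedDifference_monomial m).symm⟩
  | zero => simp
  | add p q _ _ hp hq => rw [map_add]; exact add_mem hp hq
  | smul c p _ hp => rw [map_smul]; exact Submodule.smul_mem _ c hp

theorem symInv_mem_span_schurSym (p : symmetricSubalgebra (Fin d) ℤ) :
    symInv n d p ∈ Submodule.span ℤ (Set.range fun β => symInv n d (schurSym β)) := by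
  have hp : symInv n d p = dividedDifference n d (rename Sum.inr (p * yDelta d)) := by
    conv_lhs => rw [← dividedDifference_mul_yDelta (symInv n d p)]
    exact congrArg _ (map_mul (rename Sum.inr) (p : MvPolynomial (Fin d) ℤ) (yDelta d)).symm
  rw [hp]
  generalize (p : MvPolynomial (Fin d) ℤ) * yDelta d = q
  induction q using MvPolynomial.induction_on' with
  | add q r hq hr => rw [map_add, map_add]; exact add_mem hq hr
  | monomial m c =>
    have hinl : (m.mapDomain Sum.inr : Fin n ⊕ Fin d →₀ ℕ) ∘ Sum.inl = 0 :=
      funext fun i => Finsupp.mapDomain_of_notMem_range _ _ (by simp)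
    have hinr : (m.mapDomain Sum.inr : Fin n ⊕ Fin d →₀ ℕ) ∘ Sum.inr = m :=
      funext fun j => Finsupp.mapDomain_apply Sum.inr_injective _ _
    rw [rename_monomial, ← mul_one c, ← smul_eq_mul, ← smul_monomial, map_smul,
      dividedDifference_monomial, hinl, hinr, schurMonomial]
    exact Submodule.smul_mem _ c (Submodule.subset_span ⟨m, by simp⟩)

end DividedDifference

section Substaircase

variable {n d m : ℕ}

/-- The entries of `a` at some `m` positions are bounded by `0, 1, …, m - 1` in this order. Among
the sequences with entries less than `d`, the `(n,d)`-substaircase ones are those fitting the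
staircase of length `d`. -/
def FitsStaircase (m : ℕ) (a : Fin n → ℕ) : Prop :=
  ∃ φ : Fin m → Fin n, StrictMono φ ∧ ∀ t, a (φ t) ≤ t

theorem isSubstaircase_iff (hd : 1 ≤ d) {a : Fin n → ℕ} :
    IsSubstaircase n d a ↔ (∀ j, a j < d) ∧ FitsStaircase d a := by
  classical
  constructor
  · rintro ⟨s, ⟨φ, hφ, hs, hs'⟩, has⟩
    refine ⟨fun j => ?_, φ, hφ, fun t => (has _).trans_eq (hs t)⟩
    by_cases hj : ∃ t, j = φ t
    · obtain ⟨t, rfl⟩ := hj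
      exact ((has _).trans_eq (hs t)).trans_lt t.2
    · exact ((has j).trans_eq (hs' j (not_exists.mp hj))).trans_lt (by omega)
  · rintro ⟨had, φ, hφ, ha⟩
    refine ⟨Function.extend φ (fun t => t) fun _ => d - 1,
      ⟨φ, hφ, fun t => hφ.injective.extend_apply _ _ t, fun j hj =>
        Function.extend_apply' _ _ _ fun ⟨t, ht⟩ => hj t ht.symm⟩, fun j => ?_⟩
    by_cases hj : ∃ t, φ t = j
    · obtain ⟨t, rfl⟩ := hj
      rw [hφ.injective.extend_apply]
      exact ha t
    · rw [Function.extend_apply' _ _ _ hj]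
      exact Nat.le_sub_one_of_lt (had j)

theorem fitsStaircase_zero (a : Fin n → ℕ) : FitsStaircase 0 a :=
  ⟨Fin.elim0, fun t => t.elim0, fun t => t.elim0⟩

theorem not_fitsStaircase_succ_of_isEmpty (a : Fin 0 → ℕ) : ¬FitsStaircase (m + 1) a :=
  fun ⟨φ, _⟩ => (φ 0).elim0

theorem fitsStaircase_succ_snoc {b : Fin n → ℕ} {c : ℕ} (hc : c ≤ m) :
    FitsStaircase (m + 1) (Fin.snoc b c : Fin (n + 1) → ℕ) ↔ FitsStaircase m b := by
  constructor
  · rintro ⟨φ, hφ, hb⟩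
    have hlt (t : Fin m) : φ t.castSucc < Fin.last n :=
      (hφ (Fin.castSucc_lt_last t)).trans_le (Fin.le_last _)
    refine ⟨fun t => (φ t.castSucc).castPred (hlt t).ne, fun s t hst => ?_, fun t => ?_⟩
    · exact Fin.castPred_lt_castPred_iff.mpr (hφ hst)
    · simpa [← Fin.snoc_castSucc (α := fun _ => ℕ) c b] using hb t.castSucc
  · rintro ⟨φ, hφ, hb⟩
    refine ⟨Fin.snoc (fun t => (φ t).castSucc) (Fin.last n), fun s t hst => ?_, fun t => ?_⟩
    · induction t using Fin.lastCases with
      | last =>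
        induction s using Fin.lastCases with
        | last => exact absurd hst (lt_irrefl _)
        | cast s => simp
      | cast t =>
        induction s using Fin.lastCases with
        | last => exact absurd hst (Fin.castSucc_lt_last t).not_gt
        | cast s => simpa using hφ hst
    · induction t using Fin.lastCases with
      | last => simpa using hc
      | cast t => simpa using hb t

theorem FitsStaircase.snoc {b : Fin n → ℕ} (hb : FitsStaircase m b) (c : ℕ) :
    FitsStaircase m (Fin.snoc b c : Fin (n + 1) → ℕ) := by
  obtain ⟨φ, hφ, hb⟩ := hb
  exact ⟨fun t => (φ t).castSucc, fun s t hst => hφ hst, fun t => by simpa using hb t⟩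

theorem fitsStaircase_snoc_of_le {b : Fin n → ℕ} {c : ℕ} (hc : m ≤ c) :
    FitsStaircase m (Fin.snoc b c : Fin (n + 1) → ℕ) ↔ FitsStaircase m b := by
  refine ⟨?_, fun hb => hb.snoc c⟩
  rintro ⟨φ, hφ, hb⟩
  have hne (t : Fin m) : φ t ≠ Fin.last n := fun h => by
    have hct := hb t
    rw [h, Fin.snoc_last] at hct
    omega
  refine ⟨fun t => (φ t).castPred (hne t), fun s t hst => ?_, fun t => ?_⟩
  · exact Fin.castPred_lt_castPred_iff.mpr (hφ hst)
  · simpa [← Fin.snoc_castSucc (α := fun _ => ℕ) c b] using hb t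

theorem exists_perm_val_lt_card_iff (G : Finset (Fin d)) :
    ∃ σ : Equiv.Perm (Fin d), ∀ c : Fin d, (c : ℕ) < G.card ↔ σ c ∈ G := by
  have hcard : Fintype.card {c : Fin d // (c : ℕ) < G.card} = Fintype.card {c // c ∈ G} := by
    rw [Fintype.card_coe, Fintype.card_subtype]
    exact Fin.card_filter_val_lt.trans (min_eq_right (card_finset_fin_le G))
  set e := Fintype.equivOfCardEq hcard
  exact ⟨e.extendSubtype, fun c =>
    ⟨e.extendSubtype_mem c, fun h => by_contra fun hc => e.extendSubtype_not_mem c hc h⟩⟩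

/-- With `G = univ` this matches the substaircase sequences with the surjections. The last entry
`c` of a sequence selects the last value `σ c` of the map, and `G` loses that value. -/
theorem exists_perm_fitsStaircase_iff (n : ℕ) (G : Finset (Fin d)) :
    ∃ F : Equiv.Perm (Fin n → Fin d), ∀ a,
      FitsStaircase G.card (fun j => (a j : ℕ)) ↔ ∀ g ∈ G, g ∈ Set.range (F a) := by
  induction n generalizing G with
  | zero =>
    refine ⟨1, fun a => ?_⟩
    rcases G.eq_empty_or_nonempty with rfl | hG
    · simp [fitsStaircase_zero]
    · obtain ⟨m, hm⟩ := Nat.exists_eq_succ_of_ne_zero hG.card_ne_zero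
      simpa [hm, not_fitsStaircase_succ_of_isEmpty, ← Finset.eq_empty_iff_forall_notMem]
        using hG.ne_empty
  | succ n ih =>
    obtain ⟨σ, hσ⟩ := exists_perm_val_lt_card_iff G
    choose F hF using fun c => ih (G.erase (σ c))
    set e := Fin.snocEquiv fun _ : Fin (n + 1) => Fin d
    refine ⟨e.symm.trans ((Equiv.prodShear σ F).trans e), e.forall_congr_right.mp ?_⟩
    rintro ⟨c, b⟩
    have hval : (fun j => ((e (c, b) j : Fin d) : ℕ)) = Fin.snoc (fun j => (b j : ℕ)) (c : ℕ) := by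
      ext j
      induction j using Fin.lastCases <;> simp [e]
    have hfits : FitsStaircase G.card (Fin.snoc (fun j => (b j : ℕ)) (c : ℕ) : Fin (n + 1) → ℕ) ↔
        FitsStaircase (G.erase (σ c)).card fun j => (b j : ℕ) := by
      by_cases hc : σ c ∈ G
      · rw [← Finset.card_erase_add_one hc, fitsStaircase_succ_snoc]
        rw [Finset.card_erase_of_mem hc]
        exact Nat.le_sub_one_of_lt ((hσ c).mpr hc)
      · rw [Finset.erase_eq_of_notMem hc, fitsStaircase_snoc_of_le]
        exact not_lt.mp ((hσ c).not.mpr hc)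
    rw [hval, hfits, hF]
    have hrange : Set.range (e (σ c, F c b)) = insert (σ c) (Set.range (F c b)) :=
      Fin.range_snoc _ _
    simp only [Equiv.trans_apply, Equiv.symm_apply_apply, Equiv.prodShear_apply, hrange,
      Set.mem_insert_iff, Finset.mem_erase, or_iff_not_imp_left, and_imp]
    exact forall_congr' fun g => imp.swap

/-- The substaircase sequences of length `n` with entries below `d`. -/
abbrev SubstaircaseIdx (n d : ℕ) : Type :=
  {a : Fin n → Fin d // FitsStaircase d fun j => (a j : ℕ)}

theorem card_substaircaseIdx (n d : ℕ) :
    Nat.card (SubstaircaseIdx n d) = Nat.card {x : Fin n → Fin d // Function.Surjective x} := by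
  obtain ⟨F, hF⟩ := exists_perm_fitsStaircase_iff n (Finset.univ : Finset (Fin d))
  refine Nat.card_congr (F.subtypeEquiv fun a => ?_)
  simpa [Function.Surjective] using hF a

end Substaircase

section Spanning

open scoped Polynomial

variable {B Q Q' : Type*} [CommRing B] [CommRing Q] [CommRing Q'] {n d m : ℕ}

/-- The span, with coefficients from `B`, of the monomials in `x` whose exponents are less than `d`
and fit the staircase of length `m`. -/
def staircaseSpan (φ : B →+* Q) (d m : ℕ) (x : Fin n → Q) : AddSubgroup Q :=
  AddSubgroup.closure {q | ∃ (b : B) (a : Fin n → ℕ),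
    (∀ j, a j < d) ∧ FitsStaircase m a ∧ φ b * ∏ j, x j ^ a j = q}

theorem map_staircaseSpan (f : Q →+* Q') (φ : B →+* Q) (x : Fin n → Q) :
    (staircaseSpan φ d m x).map (f : Q →+ Q') = staircaseSpan (f.comp φ) d m (f ∘ x) := by
  rw [staircaseSpan, AddMonoidHom.map_closure, staircaseSpan]
  congr 1
  ext q
  constructor
  · rintro ⟨_, ⟨b, a, had, ham, rfl⟩, rfl⟩
    exact ⟨b, a, had, ham, by simp⟩
  · rintro ⟨b, a, had, ham, rfl⟩
    exact ⟨_, ⟨b, a, had, ham, rfl⟩, by simp⟩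

theorem exists_mem_staircaseSpan_sub_mem {I : Ideal Q} {φ : B →+* Q} {x : Fin n → Q}
    (h : staircaseSpan ((Ideal.Quotient.mk I).comp φ) d m (Ideal.Quotient.mk I ∘ x) = ⊤) (q : Q) :
    ∃ s ∈ staircaseSpan φ d m x, q - s ∈ I := by
  have hq : Ideal.Quotient.mk I q ∈
      (staircaseSpan φ d m x).map (Ideal.Quotient.mk I : Q →+ Q ⧸ I) := by
    rw [map_staircaseSpan, h]
    trivial
  obtain ⟨s, hs, hsq⟩ := hq
  exact ⟨s, hs, Ideal.Quotient.eq.mp hsq.symm⟩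

theorem eval₂_mul_prod_mem_staircaseSpan {φ : B →+* Q} {x : Fin (n + 1) → Q} {b : Fin n → ℕ} {D : ℕ}
    {p : B[X]} (hp : p.degree < D) (hb : ∀ j, b j < d) (hD : D ≤ d)
    (hfit : ∀ c < D, FitsStaircase m (Fin.snoc b c : Fin (n + 1) → ℕ)) :
    p.eval₂ φ (x (Fin.last n)) * ∏ j, x (Fin.castSucc j) ^ b j ∈ staircaseSpan φ d m x := by
  rw [Polynomial.eval₂_eq_sum, Polynomial.sum_def, Finset.sum_mul]
  refine AddSubgroup.sum_mem _ fun c hc => AddSubgroup.subset_closure ?_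
  have hcD : c < D := by
    exact_mod_cast (Polynomial.le_degree_of_mem_supp c hc).trans_lt hp
  refine ⟨p.coeff c, Fin.snoc b c, fun j => ?_, hfit c hcD, ?_⟩
  · induction j using Fin.lastCases with
    | last => simpa using hcD.trans_le hD
    | cast j => simpa using hb j
  · rw [Fin.prod_univ_castSucc]
    simp only [Fin.snoc_castSucc, Fin.snoc_last]
    ring

/-- The situation in which the staircase monomials span: `Q` is generated over `B` by roots
`x` of `u * g`, and `g` divides `∏ (X - x j)`. -/
structure StaircaseDatum (φ : B →+* Q) (x : Fin n → Q) (u g : B[X]) : Prop where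
  monic_left : u.Monic
  monic_right : g.Monic
  eval₂_mul_eq_zero (i : Fin n) : u.eval₂ φ (x i) * g.eval₂ φ (x i) = 0
  map_dvd : g.map φ ∣ ∏ i, (Polynomial.X - Polynomial.C (x i))
  closure_eq_top : Subring.closure (Set.range φ ∪ Set.range x) = ⊤

/-- The homomorphism `B[X] → Q ⧸ I` given by `φ` on the coefficients and by `X ↦ z`. -/
noncomputable def quotientEval (φ : B →+* Q) (z : Q) (I : Ideal Q) : B[X] →+* Q ⧸ I :=
  (Ideal.Quotient.mk I).comp (Polynomial.eval₂RingHom φ z)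

theorem quotientEval_apply (φ : B →+* Q) (z : Q) (I : Ideal Q) (p : B[X]) :
    quotientEval φ z I p = Ideal.Quotient.mk I (p.eval₂ φ z) :=
  rfl

theorem map_C_map_quotientEval (φ : B →+* Q) (z : Q) (I : Ideal Q) (p : B[X]) :
    (p.map Polynomial.C).map (quotientEval φ z I) = (p.map φ).map (Ideal.Quotient.mk I) := by
  rw [Polynomial.map_map, Polynomial.map_map]
  congr 1
  ext b
  simp [quotientEval_apply]

theorem closure_range_quotientEval_eq_top {φ : B →+* Q} {x : Fin (n + 1) → Q}
    (h : Subring.closure (Set.range φ ∪ Set.range x) = ⊤) (I : Ideal Q) :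
    Subring.closure (Set.range (quotientEval φ (x (Fin.last n)) I) ∪
      Set.range (Ideal.Quotient.mk I ∘ x ∘ Fin.castSucc)) = ⊤ := by
  rw [eq_top_iff, ← RingHom.range_eq_top.mpr Ideal.Quotient.mk_surjective, RingHom.range_eq_map,
    ← h, RingHom.map_closure, Subring.closure_le]
  rintro _ ⟨q, ⟨b, rfl⟩ | ⟨i, rfl⟩, rfl⟩
  · exact Subring.subset_closure (Or.inl ⟨Polynomial.C b, by simp [quotientEval_apply]⟩)
  · induction i using Fin.lastCases with
    | last => exact Subring.subset_closure (Or.inl ⟨Polynomial.X, by simp [quotientEval_apply]⟩)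
    | cast i => exact Subring.subset_closure (Or.inr ⟨i, rfl⟩)

theorem X_sub_C_mul_divByMonic_map_C (g : B[X]) :
    (Polynomial.X - Polynomial.C Polynomial.X) *
        (g.map Polynomial.C /ₘ (Polynomial.X - Polynomial.C Polynomial.X)) =
      g.map Polynomial.C - Polynomial.C g := by
  have h := Polynomial.modByMonic_add_div (g.map Polynomial.C)
    (Polynomial.X - Polynomial.C (Polynomial.X : B[X]))
  rw [Polynomial.modByMonic_X_sub_C_eq_C_eval, Polynomial.eval_map, Polynomial.eval₂_C_X] at h
  linear_combination h

theorem dvd_C_eval_mul_of_dvd_mul_X_sub_C {p q : Q[X]} {z : Q}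
    (h : p ∣ q * (Polynomial.X - Polynomial.C z)) : p ∣ Polynomial.C (p.eval z) * q := by
  have hp := Polynomial.modByMonic_add_div p (Polynomial.X - Polynomial.C z)
  rw [Polynomial.modByMonic_X_sub_C_eq_C_eval] at hp
  have hpq : Polynomial.C (p.eval z) * q =
      p * q - q * (Polynomial.X - Polynomial.C z) * (p /ₘ (Polynomial.X - Polynomial.C z)) := by
    linear_combination q * hp
  rw [hpq]
  exact dvd_sub (dvd_mul_right _ _) (h.mul_right _)

theorem map_mk_torsionOf_dvd {p q : Q[X]} (hp : p.Monic) {c : Q} (h : p ∣ Polynomial.C c * q) :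
    p.map (Ideal.Quotient.mk (Ideal.torsionOf Q Q c)) ∣
      q.map (Ideal.Quotient.mk (Ideal.torsionOf Q Q c)) := by
  have hmod : c • (q %ₘ p) = 0 := by
    rw [← Polynomial.smul_modByMonic, Polynomial.smul_eq_C_mul,
      (Polynomial.modByMonic_eq_zero_iff_dvd hp).mpr h]
  have hmap : (q %ₘ p).map (Ideal.Quotient.mk (Ideal.torsionOf Q Q c)) = 0 := by
    ext i
    rw [Polynomial.coeff_map, Polynomial.coeff_zero, Ideal.Quotient.eq_zero_iff_mem,
      Ideal.mem_torsionOf_iff, smul_eq_mul, mul_comm, ← smul_eq_mul, ← Polynomial.coeff_smul, hmod,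
      Polynomial.coeff_zero]
  rw [← Polynomial.modByMonic_add_div q p, Polynomial.map_add, hmap, zero_add, Polynomial.map_mul]
  exact dvd_mul_right _ _

namespace StaircaseDatum

variable {φ : B →+* Q} {x : Fin (n + 1) → Q} {u g : B[X]}

theorem map_dvd_prod_mul (h : StaircaseDatum φ x u g) :
    g.map φ ∣ (∏ i : Fin n, (Polynomial.X - Polynomial.C (x i.castSucc))) *
      (Polynomial.X - Polynomial.C (x (Fin.last n))) := by
  rw [← Fin.prod_univ_castSucc fun i => Polynomial.X - Polynomial.C (x i)]
  exact h.map_dvd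

theorem quotientEval_eval₂_mul_eq_zero (h : StaircaseDatum φ x u g) (I : Ideal Q) (z : Q)
    (i : Fin (n + 1)) :
    (u.map Polynomial.C).eval₂ (quotientEval φ z I) (Ideal.Quotient.mk I (x i)) *
      (g.map Polynomial.C).eval₂ (quotientEval φ z I) (Ideal.Quotient.mk I (x i)) = 0 := by
  rw [← Polynomial.eval_map, ← Polynomial.eval_map, map_C_map_quotientEval, map_C_map_quotientEval,
    Polynomial.eval_map_apply, Polynomial.eval_map_apply, ← map_mul, Polynomial.eval_map,
    Polynomial.eval_map, h.eval₂_mul_eq_zero, map_zero]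

/-- Modulo `g(z)`, with `z` the last of the `x`, the factor `X - z` splits off `g` and may be moved
to `u`. -/
theorem quotient_span (h : StaircaseDatum φ x u g) (hg : g.natDegree ≠ 0) :
    StaircaseDatum
      (quotientEval φ (x (Fin.last n)) (Ideal.span {g.eval₂ φ (x (Fin.last n))}))
      (Ideal.Quotient.mk _ ∘ x ∘ Fin.castSucc)
      (u.map Polynomial.C * (Polynomial.X - Polynomial.C Polynomial.X))
      (g.map Polynomial.C /ₘ (Polynomial.X - Polynomial.C Polynomial.X)) := by
  have : Nontrivial B :=
    not_subsingleton_iff_nontrivial.mp fun _ => hg (Polynomial.natDegree_of_subsingleton)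
  set z := x (Fin.last n)
  set ψ := quotientEval φ z (Ideal.span {g.eval₂ φ z}) with hψ
  have hψg : ψ g = 0 :=
    Ideal.Quotient.eq_zero_iff_mem.mpr (Ideal.mem_span_singleton_self _)
  have hψX : ψ Polynomial.X = Ideal.Quotient.mk _ z := by
    rw [hψ, quotientEval_apply, Polynomial.eval₂_X]
  refine ⟨(h.monic_left.map _).mul (Polynomial.monic_X_sub_C _), ?_, fun i => ?_, ?_,
    closure_range_quotientEval_eq_top h.closure_eq_top _⟩
  · rw [Polynomial.Monic, Polynomial.leadingCoeff_divByMonic_of_monic (Polynomial.monic_X_sub_C _)]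
    · exact h.monic_right.map _
    · rw [Polynomial.degree_X_sub_C, Polynomial.degree_eq_natDegree (h.monic_right.map _).ne_zero,
        h.monic_right.natDegree_map]
      exact_mod_cast Nat.one_le_iff_ne_zero.mpr hg
  · rw [Polynomial.eval₂_mul, mul_assoc, ← Polynomial.eval₂_mul, X_sub_C_mul_divByMonic_map_C,
      Polynomial.eval₂_sub, Polynomial.eval₂_C, hψg, sub_zero]
    exact h.quotientEval_eval₂_mul_eq_zero _ _ _
  · have hdvd := Polynomial.map_dvd (Ideal.Quotient.mk (Ideal.span {g.eval₂ φ z}))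
      h.map_dvd_prod_mul
    have hfactor := congrArg (Polynomial.map ψ) (X_sub_C_mul_divByMonic_map_C g)
    rw [Polynomial.map_mul, Polynomial.map_sub, Polynomial.map_sub, Polynomial.map_X,
      Polynomial.map_C, Polynomial.map_C, hψg, hψX, Polynomial.C_0, sub_zero,
      map_C_map_quotientEval] at hfactor
    rw [← hfactor, Polynomial.map_mul, Polynomial.map_sub, Polynomial.map_X, Polynomial.map_C,
      mul_comm, Polynomial.map_prod] at hdvd
    have hz := (Polynomial.monic_X_sub_C (Ideal.Quotient.mk (Ideal.span {g.eval₂ φ z}) z))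
      |>.mem_nonZeroDivisors
    simpa using (dvd_cancel_right_mem_nonZeroDivisors hz).mp (by simpa using hdvd)

/-- Modulo the annihilator of `g(z)`, with `z` the last of the `x`, the polynomial `g` already
divides the product over the remaining `x`. -/
theorem quotient_torsionOf (h : StaircaseDatum φ x u g) :
    StaircaseDatum
      (quotientEval φ (x (Fin.last n)) (Ideal.torsionOf Q Q (g.eval₂ φ (x (Fin.last n)))))
      (Ideal.Quotient.mk _ ∘ x ∘ Fin.castSucc)
      (u.map Polynomial.C) (g.map Polynomial.C) := by
  refine ⟨h.monic_left.map _, h.monic_right.map _,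
    fun i => h.quotientEval_eval₂_mul_eq_zero _ _ _, ?_,
    closure_range_quotientEval_eq_top h.closure_eq_top _⟩
  have hdvd := map_mk_torsionOf_dvd (h.monic_right.map φ)
    (dvd_C_eval_mul_of_dvd_mul_X_sub_C h.map_dvd_prod_mul)
  rw [Polynomial.eval_map, Polynomial.map_prod] at hdvd
  rw [map_C_map_quotientEval]
  simpa using hdvd

/-- The remainder modulo `g` has degree less than `m + 1`, and the staircase loses its top step. -/
theorem exists_mem_staircaseSpan_dvd_sub (hg : g.Monic) (hgm : g.natDegree = m + 1)
    (hmd : m < d) {s : Q} (hs : s ∈ staircaseSpan (Polynomial.eval₂RingHom φ (x (Fin.last n))) d m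
      (x ∘ Fin.castSucc)) :
    ∃ s' ∈ staircaseSpan φ d (m + 1) x, g.eval₂ φ (x (Fin.last n)) ∣ s - s' := by
  have : Nontrivial B := not_subsingleton_iff_nontrivial.mp fun _ => by
    simp [Polynomial.natDegree_of_subsingleton] at hgm
  induction hs using AddSubgroup.closure_induction with
  | mem q hq =>
    obtain ⟨p, b, hbd, hbm, rfl⟩ := hq
    refine ⟨_, eval₂_mul_prod_mem_staircaseSpan (p := p %ₘ g) (D := m + 1) ?_ hbd hmd
      fun c hc => (fitsStaircase_succ_snoc (Nat.lt_succ_iff.mp hc)).mpr hbm,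
      (p /ₘ g).eval₂ φ (x (Fin.last n)) * ∏ j, x (Fin.castSucc j) ^ b j, ?_⟩
    · rw [← hgm, ← Polynomial.degree_eq_natDegree hg.ne_zero]
      exact Polynomial.degree_modByMonic_lt _ hg
    · rw [Polynomial.coe_eval₂RingHom]
      nth_rw 1 [← Polynomial.modByMonic_add_div p g]
      rw [Polynomial.eval₂_add, Polynomial.eval₂_mul]
      simp only [Function.comp_apply]
      ring
  | zero => exact ⟨0, zero_mem _, by simp⟩
  | add q r _ _ hq hr =>
    obtain ⟨q', hq', hqq'⟩ := hq
    obtain ⟨r', hr', hrr'⟩ := hr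
    exact ⟨q' + r', add_mem hq' hr', by simpa [add_sub_add_comm] using dvd_add hqq' hrr'⟩
  | neg q _ hq =>
    obtain ⟨q', hq', hqq'⟩ := hq
    exact ⟨-q', neg_mem hq', by rw [← neg_sub', dvd_neg]; exact hqq'⟩

/-- Since `u(z) g(z) = 0`, a polynomial in `z` multiplied by `g(z)` may first be reduced modulo
`u`. -/
theorem eval₂_mul_mem_staircaseSpan [Nontrivial B] (hu : u.Monic) (hg : g.Monic)
    (hd : u.natDegree + g.natDegree = d)
    (hug : u.eval₂ φ (x (Fin.last n)) * g.eval₂ φ (x (Fin.last n)) = 0) {s : Q}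
    (hs : s ∈ staircaseSpan (Polynomial.eval₂RingHom φ (x (Fin.last n))) d m (x ∘ Fin.castSucc)) :
    g.eval₂ φ (x (Fin.last n)) * s ∈ staircaseSpan φ d m x := by
  induction hs using AddSubgroup.closure_induction with
  | mem q hq =>
    obtain ⟨p, b, hbd, hbm, rfl⟩ := hq
    have hdeg : (g * (p %ₘ u)).degree < d := by
      rw [mul_comm, hg.degree_mul, Polynomial.degree_eq_natDegree hg.ne_zero, ← hd, Nat.cast_add,
        ← Polynomial.degree_eq_natDegree hu.ne_zero]
      exact WithBot.add_lt_add_right (by simp) (Polynomial.degree_modByMonic_lt _ hu)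
    convert eval₂_mul_prod_mem_staircaseSpan hdeg hbd le_rfl fun c _ => hbm.snoc c using 1
    rw [Polynomial.coe_eval₂RingHom, Polynomial.eval₂_mul]
    nth_rw 1 [← Polynomial.modByMonic_add_div p u]
    rw [Polynomial.eval₂_add, Polynomial.eval₂_mul]
    simp only [Function.comp_apply]
    linear_combination ((p /ₘ u).eval₂ φ (x (Fin.last n)) * ∏ j, x (Fin.castSucc j) ^ b j) * hug
  | zero => simp
  | add q r _ _ hq hr => rw [mul_add]; exact add_mem hq hr
  | neg q _ hq => rw [mul_neg]; exact neg_mem hq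

end StaircaseDatum

theorem staircaseSpan_eq_top_of_isEmpty {φ : B →+* Q} {x : Fin 0 → Q} {u g : B[X]}
    (h : StaircaseDatum φ x u g) : staircaseSpan φ d g.natDegree x = ⊤ := by
  cases subsingleton_or_nontrivial Q
  · exact Subsingleton.elim _ _
  have hdvd := h.map_dvd
  rw [Finset.univ_eq_empty, Finset.prod_empty] at hdvd
  have hg : g.natDegree = 0 := by
    rw [← h.monic_right.natDegree_map φ,
      (h.monic_right.map φ).eq_one_of_isUnit (isUnit_of_dvd_one hdvd), Polynomial.natDegree_one]
  have hclosure := h.closure_eq_top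
  rw [Set.range_eq_empty x, Set.union_empty, ← RingHom.coe_range, Subring.closure_eq] at hclosure
  rw [hg, eq_top_iff]
  rintro q -
  obtain ⟨b, rfl⟩ := RingHom.range_eq_top.mp hclosure q
  exact AddSubgroup.subset_closure ⟨b, 0, fun j => j.elim0, fitsStaircase_zero _, by simp⟩

theorem StaircaseDatum.staircaseSpan_eq_top {n : ℕ} {φ : B →+* Q} {x : Fin n → Q} {u g : B[X]}
    (h : StaircaseDatum φ x u g) (hd : u.natDegree + g.natDegree = d) :
    staircaseSpan φ d g.natDegree x = ⊤ := by
  induction n generalizing B Q with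
  | zero => exact staircaseSpan_eq_top_of_isEmpty h
  | succ n ih =>
    cases subsingleton_or_nontrivial Q
    · exact Subsingleton.elim _ _
    have : Nontrivial B := φ.domain_nontrivial
    set z := x (Fin.last n)
    have hspan (q : Q) : ∃ s ∈ staircaseSpan φ d g.natDegree x, g.eval₂ φ z ∣ q - s := by
      rcases hm : g.natDegree with - | m
      · refine ⟨0, zero_mem _, ?_⟩
        rw [h.monic_right.natDegree_eq_zero.mp hm, Polynomial.eval₂_one]
        exact one_dvd _
      have hdeg : (g.map Polynomial.C /ₘ
          (Polynomial.X - Polynomial.C (Polynomial.X : B[X]))).natDegree = m := by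
        rw [Polynomial.natDegree_divByMonic _ (Polynomial.monic_X_sub_C _),
          h.monic_right.natDegree_map, Polynomial.natDegree_X_sub_C, hm, Nat.add_sub_cancel]
      have htop := ih (h.quotient_span (by omega)) (by
        rw [(h.monic_left.map _).natDegree_mul (Polynomial.monic_X_sub_C _),
          h.monic_left.natDegree_map, Polynomial.natDegree_X_sub_C, hdeg]
        omega)
      rw [hdeg] at htop
      obtain ⟨s, hs, hqs⟩ := exists_mem_staircaseSpan_sub_mem htop q
      obtain ⟨s', hs', hss'⟩ := exists_mem_staircaseSpan_dvd_sub h.monic_right hm (by omega) hs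
      exact ⟨s', hs', by simpa using dvd_add (Ideal.mem_span_singleton.mp hqs) hss'⟩
    have hmul (q : Q) : g.eval₂ φ z * q ∈ staircaseSpan φ d g.natDegree x := by
      have htop := ih h.quotient_torsionOf (by
        rw [h.monic_left.natDegree_map, h.monic_right.natDegree_map, hd])
      rw [h.monic_right.natDegree_map] at htop
      obtain ⟨s, hs, hqs⟩ := exists_mem_staircaseSpan_sub_mem htop q
      rw [Ideal.mem_torsionOf_iff, smul_eq_mul, sub_mul, sub_eq_zero] at hqs
      rw [mul_comm, hqs, mul_comm]
      exact eval₂_mul_mem_staircaseSpan h.monic_left h.monic_right hd (h.eval₂_mul_eq_zero _) hs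
    rw [eq_top_iff]
    rintro q -
    obtain ⟨s, hs, r, hr⟩ := hspan q
    rw [← sub_add_cancel q s, hr]
    exact add_mem (hmul r) hs

end Spanning

section JacobiTrudiSpan

variable {R A : Type*} [CommRing R] [CommRing A] [Algebra R A] {k d : ℕ}

theorem jacobiTrudi_mem_span_strictAnti (h : ℕ → A) (γ : Fin d → Fin k) :
    jacobiTrudi h (fun i => γ i) ∈ Submodule.span R (Set.range fun β : {β : Fin d → Fin k //
      StrictAnti β} => jacobiTrudi h fun i => β.1 i) := by
  by_cases hγ : Function.Injective γ
  · set σ := Tuple.sort (OrderDual.toDual ∘ γ)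
    have hanti : Antitone (γ ∘ σ) := Tuple.monotone_sort (OrderDual.toDual ∘ γ)
    have hdet : jacobiTrudi h (fun i => γ (σ i)) =
        (Equiv.Perm.sign σ : ℤ) * jacobiTrudi h fun i => γ i :=
      Matrix.det_permute σ (Matrix.of fun i => jacobiTrudiRow d h (γ i))
    have hmem := Submodule.subset_span (R := R) (Set.mem_range_self
      (f := fun β : {β : Fin d → Fin k // StrictAnti β} => jacobiTrudi h fun i => β.1 i)
      ⟨γ ∘ σ, hanti.strictAnti_of_injective (hγ.comp σ.injective)⟩)
    simp only [Function.comp_apply, hdet] at hmem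
    rcases Int.units_eq_one_or (Equiv.Perm.sign σ) with hσ | hσ
    · simpa [hσ] using hmem
    · simpa [hσ] using hmem
  · obtain ⟨i, j, hij, hne⟩ := Function.not_injective_iff.mp hγ
    have hdet : jacobiTrudi h (fun i => γ i) = 0 :=
      Matrix.det_zero_of_row_eq hne (by ext l; simp [hij])
    rw [hdet]
    exact zero_mem _

theorem jacobiTrudi_mem_span_of_row_eq_sum {h : ℕ → A} {c : ℕ → Fin k → R}
    (hc : ∀ m, jacobiTrudiRow d h m = ∑ i, c m i • jacobiTrudiRow d h i) (β : Fin d → ℕ) :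
    jacobiTrudi h β ∈ Submodule.span R (Set.range fun β : {β : Fin d → Fin k //
      StrictAnti β} => jacobiTrudi h fun i => β.1 i) := by
  have hexpand : jacobiTrudi h β =
      ∑ γ : Fin d → Fin k, (∏ i, c (β i) (γ i)) • jacobiTrudi h fun i => γ i := by
    have hdet (β : Fin d → ℕ) : jacobiTrudi h β = (Matrix.detRowAlternating (R := A)
      (n := Fin d)).toMultilinearMap.restrictScalars R fun i => jacobiTrudiRow d h (β i) := rfl
    simp_rw [hdet, hc (β _), MultilinearMap.map_sum, MultilinearMap.map_smul_univ]
  rw [hexpand]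
  exact sum_mem fun γ _ => Submodule.smul_mem _ _ (jacobiTrudi_mem_span_strictAnti h γ)

theorem jacobiTrudi_mem_span_of_coeff_eq_zero (hdk : d ≤ k) (z : Fin k → R) {h : ℕ → A}
    (hz : ∀ r, k - d < r → PowerSeries.coeff r
      ((revProd (algebraMap R A ∘ z) : PowerSeries A) * PowerSeries.mk h) = 0)
    (β : Fin d → ℕ) :
    jacobiTrudi h β ∈ Submodule.span R (Set.range fun β : {β : Fin d → Fin k //
      StrictAnti β} => jacobiTrudi h fun i => β.1 i) := by
  nontriviality A
  have := (algebraMap R A).domain_nontrivial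
  set P : Polynomial R := ∏ i, (Polynomial.X - Polynomial.C (z i))
  have hdeg : P.natDegree = k := by simp [P]
  have hreflect : (P.reflect k).map (algebraMap R A) = revProd (algebraMap R A ∘ z) := by
    rw [← map_revProd, ← reflect_prod_X_sub_C z, Fintype.card_fin]
  refine jacobiTrudi_mem_span_of_row_eq_sum (c := fun m i =>
    (Polynomial.X ^ m %ₘ P).coeff i) (fun m => ?_) β
  have hrow := eq_sum_coeff_modByMonic_smul (Polynomial.monic_prod_X_sub_C z Finset.univ)
    (sum_coeff_smul_jacobiTrudiRow (A := A) (hdk.trans_eq hdeg.symm) (h := h) fun r hr => ?_) m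
  · rw [hrow]
    exact (Equiv.sum_comp (finCongr hdeg.symm) _).symm
  · rw [hdeg] at hr ⊢
    rw [hreflect]
    exact hz r hr

end JacobiTrudiSpan

section Relations

variable (n k d : ℕ)

/-- The elementary symmetric polynomial `e_r` in the ring of symmetric polynomials. -/
noncomputable def eSym (r : ℕ) : symmetricSubalgebra (Fin d) ℤ :=
  ⟨esymm (Fin d) ℤ r, esymm_isSymmetric _ _ r⟩

/-- The polynomial `∏ (T - y_j)` over the ring of symmetric polynomials in the `y_j`. -/
noncomputable def ySymProd : Polynomial (symmetricSubalgebra (Fin d) ℤ) :=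
  ∑ j ∈ Finset.range (d + 1),
    (-1) ^ j * (Polynomial.C (eSym d j) * Polynomial.X ^ (d - j))

/-- The generator `∑ (-1)^b e_a(x) h_b(y)`, with `a + b = r`, as an `S_d`-invariant. -/
noncomputable def xyGenerator (r : ℕ) : invZ2 n d :=
  ∑ j ∈ Finset.range (r + 1),
    (-1) ^ j * (aeval (xInv n d) (esymm (Fin n) ℤ (r - j)) * symInv n d (hSym d j))

/-- The generator `∏ (x_i - y_j)`, expanded in powers of `x_i`, as an `S_d`-invariant. -/
noncomputable def rootGenerator (i : Fin n) : invZ2 n d :=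
  ∑ j ∈ Finset.range (d + 1), (-1) ^ j * (xInv n d i ^ (d - j) * symInv n d (eSym d j))

/-- The set `G` of generators inside the ring of `S_d`-invariants. -/
def invariantGenerators : Set (invZ2 n d) :=
  {p | ∃ r, k - d < r ∧ p = symInv n d (hSym d r)} ∪ {p | ∃ r, n - d < r ∧ p = xyGenerator n d r} ∪
    {p | ∃ i, p = rootGenerator n d i}

variable {n k d}

theorem coe_xyGenerator (r : ℕ) :
    (xyGenerator n d r : MvPolynomial (Fin n ⊕ Fin d) ℤ) = genXYZ n d r := by
  have he (p : MvPolynomial (Fin n) ℤ) : (aeval (xInv n d) p : MvPolynomial (Fin n ⊕ Fin d) ℤ) =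
      rename Sum.inl p := by
    rw [rename_eq_aeval]
    exact (Subalgebra.mvPolynomial_aeval_coe _ _ _).symm
  simp only [xyGenerator, AddSubmonoidClass.coe_finsetSum, MulMemClass.coe_mul,
    SubmonoidClass.coe_pow, he]
  rfl

theorem coe_rootGenerator (i : Fin n) :
    (rootGenerator n d i : MvPolynomial (Fin n ⊕ Fin d) ℤ) = genPowZ n d i := by
  simp only [rootGenerator, AddSubmonoidClass.coe_finsetSum, MulMemClass.coe_mul,
    SubmonoidClass.coe_pow]
  rfl

theorem image_invariantGenerators :
    Subtype.val '' invariantGenerators n k d = GgensZ n k d := by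
  ext p
  constructor
  · rintro ⟨_, (⟨r, hr, rfl⟩ | ⟨r, hr, rfl⟩) | ⟨i, rfl⟩, rfl⟩
    · exact Or.inl (Or.inl ⟨r, hr, rfl⟩)
    · exact Or.inl (Or.inr ⟨r, hr, coe_xyGenerator r⟩)
    · exact Or.inr ⟨i, coe_rootGenerator i⟩
  · rintro ((⟨r, hr, rfl⟩ | ⟨r, hr, rfl⟩) | ⟨i, rfl⟩)
    · exact ⟨_, Or.inl (Or.inl ⟨r, hr, rfl⟩), rfl⟩
    · exact ⟨_, Or.inl (Or.inr ⟨r, hr, rfl⟩), coe_xyGenerator r⟩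
    · exact ⟨_, Or.inr ⟨i, rfl⟩, coe_rootGenerator i⟩

theorem map_val_ySymProd : (ySymProd d).map (symmetricSubalgebra (Fin d) ℤ).val.toRingHom =
    ∏ j, (Polynomial.X - Polynomial.C (X j : MvPolynomial (Fin d) ℤ)) := by
  have h := Multiset.prod_X_sub_X_eq_sum_esymm
    ((Finset.univ : Finset (Fin d)).val.map (X : Fin d → MvPolynomial (Fin d) ℤ))
  simp only [Multiset.map_map, Multiset.card_map, Finset.card_val, Finset.card_fin,
    ← aeval_esymm_eq_multiset_esymm (Fin d) ℤ, aeval_X_left_apply] at h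
  refine Eq.trans ?_ h.symm
  simp only [ySymProd, Polynomial.map_sum, Polynomial.map_mul, Polynomial.map_pow,
    Polynomial.map_neg, Polynomial.map_one, Polynomial.map_C, Polynomial.map_X]
  rfl

theorem val_injective_symmetricSubalgebra :
    Function.Injective (symmetricSubalgebra (Fin d) ℤ).val.toRingHom :=
  Subtype.val_injective

theorem monic_ySymProd : (ySymProd d).Monic :=
  Polynomial.monic_of_injective val_injective_symmetricSubalgebra
    (map_val_ySymProd ▸ Polynomial.monic_prod_X_sub_C _ _)

theorem natDegree_ySymProd : (ySymProd d).natDegree = d := by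
  rw [← Polynomial.natDegree_map_eq_of_injective val_injective_symmetricSubalgebra,
    map_val_ySymProd, Polynomial.natDegree_prod_of_monic _ _ fun _ _ => Polynomial.monic_X_sub_C _]
  simp

theorem mk_hSym_mul_reflect_ySymProd :
    PowerSeries.mk (hSym d) * ((ySymProd d).reflect d : PowerSeries _) = 1 := by
  have hreflect : ((ySymProd d).reflect d).map (symmetricSubalgebra (Fin d) ℤ).val.toRingHom =
      revProd X := by
    rw [← Polynomial.reflect_map, map_val_ySymProd, ← reflect_prod_X_sub_C, Fintype.card_fin]
  have hmk : (PowerSeries.mk (hSym d)).map (symmetricSubalgebra (Fin d) ℤ).val.toRingHom =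
      hsymmSeries X := by
    ext1 r
    rw [PowerSeries.coeff_map, PowerSeries.coeff_mk, hsymmSeries, PowerSeries.coeff_mk]
    exact (aeval_X_left_apply _).symm
  refine PowerSeries.map_injective _ val_injective_symmetricSubalgebra ?_
  rw [map_mul, map_one, hmk, ← Polynomial.polynomial_map_coe, hreflect, hsymmSeries_mul_revProd]

variable {A A' : Type*} [CommRing A] [CommRing A']

/-- The image under `f` of the generating series of the complete homogeneous symmetric polynomials
in `y`. -/
noncomputable def ySeries (f : invZ2 n d →+* A) : PowerSeries A :=
  PowerSeries.mk fun r => f (symInv n d (hSym d r))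

/-- The relations defining the quotient, deformed by parameters `z` in the first family. They hold
at the points `y_j ∈ {z_i}`, `x_i ∈ {y_j}`, provided that all `y_j` occur among the `x_i`, and
specialize to the vanishing of the generators for `z = 0`. -/
structure DeformedRelations (z : Fin k → A) (f : invZ2 n d →+* A) : Prop where
  coeff_revProd_mul (r : ℕ) (hr : k - d < r) :
    PowerSeries.coeff r ((revProd z : PowerSeries A) * ySeries f) = 0
  coeff_revProd_xInv_mul (r : ℕ) (hr : n - d < r) :
    PowerSeries.coeff r ((revProd (f ∘ xInv n d) : PowerSeries A) * ySeries f) = 0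
  eval₂_ySymProd (i : Fin n) :
    (ySymProd d).eval₂ (f.comp (symInv n d : _ →+* invZ2 n d)) (f (xInv n d i)) = 0

theorem map_ySeries (g : A →+* A') (f : invZ2 n d →+* A) :
    (ySeries f).map g = ySeries (g.comp f) := by
  ext1 r
  simp [ySeries]

theorem map_coeff_revProd_mul_ySeries {ι : Type*} [Fintype ι] (g : A →+* A') (z : ι → A)
    (f : invZ2 n d →+* A) (r : ℕ) :
    g (PowerSeries.coeff r ((revProd z : PowerSeries A) * ySeries f)) =
      PowerSeries.coeff r ((revProd (g ∘ z) : PowerSeries A') * ySeries (g.comp f)) := by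
  rw [← map_revProd, ← map_ySeries, Polynomial.polynomial_map_coe, ← map_mul,
    PowerSeries.coeff_map]

theorem DeformedRelations.map {z : Fin k → A} {f : invZ2 n d →+* A} (h : DeformedRelations z f)
    (g : A →+* A') : DeformedRelations (g ∘ z) (g.comp f) := by
  refine ⟨fun r hr => ?_, fun r hr => ?_, fun i => ?_⟩
  · rw [← map_coeff_revProd_mul_ySeries, h.coeff_revProd_mul r hr, map_zero]
  · rw [RingHom.coe_comp, Function.comp_assoc, ← map_coeff_revProd_mul_ySeries,
      h.coeff_revProd_xInv_mul r hr, map_zero]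
  · rw [RingHom.comp_apply, RingHom.comp_assoc, ← Polynomial.hom_eval₂, h.eval₂_ySymProd i,
      map_zero]

theorem DeformedRelations.of_forall_map {P : Type*} {z : Fin k → A} {f : invZ2 n d →+* A}
    {g : P → A →+* A'} (hg : ∀ a, (∀ p, g p a = 0) → a = 0)
    (h : ∀ p, DeformedRelations (g p ∘ z) ((g p).comp f)) : DeformedRelations z f := by
  refine ⟨fun r hr => hg _ fun p => ?_, fun r hr => hg _ fun p => ?_, fun i => hg _ fun p => ?_⟩
  · rw [map_coeff_revProd_mul_ySeries, (h p).coeff_revProd_mul r hr]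
  · rw [map_coeff_revProd_mul_ySeries, ← Function.comp_assoc, ← RingHom.coe_comp,
      (h p).coeff_revProd_xInv_mul r hr]
  · rw [Polynomial.hom_eval₂, ← RingHom.comp_assoc, ← RingHom.comp_apply, (h p).eval₂_ySymProd i]

theorem coeff_revProd_xInv_mul_ySeries (f : invZ2 n d →+* A) (r : ℕ) :
    PowerSeries.coeff r ((revProd (f ∘ xInv n d) : PowerSeries A) * ySeries f) =
      (-1) ^ r * f (xyGenerator n d r) := by
  rw [mul_comm, PowerSeries.coeff_mul, Finset.Nat.sum_antidiagonal_eq_sum_range_succ_mk,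
    xyGenerator, map_sum, Finset.mul_sum]
  refine Finset.sum_congr rfl fun j hj => ?_
  have hsign : (-1 : A) ^ (r - j) = (-1) ^ r * (-1) ^ j := by
    rw [← Nat.sub_add_cancel (Finset.mem_range_succ_iff.mp hj), Nat.add_sub_cancel, pow_add,
      mul_assoc, ← mul_pow, neg_one_mul, neg_neg, one_pow, mul_one]
  have hesymm : aeval (f ∘ xInv n d) (esymm (Fin n) ℤ (r - j)) =
      f (aeval (xInv n d) (esymm (Fin n) ℤ (r - j))) :=
    (comp_aeval_apply (φ := f.toIntAlgHom) ..).symm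
  rw [ySeries, PowerSeries.coeff_mk, Polynomial.coeff_coe, coeff_revProd, hsign, hesymm, map_mul,
    map_mul, map_pow, map_neg, map_one]
  ring

theorem eval₂_ySymProd_eq (f : invZ2 n d →+* A) (i : Fin n) :
    (ySymProd d).eval₂ (f.comp (symInv n d : _ →+* invZ2 n d)) (f (xInv n d i)) =
      f (rootGenerator n d i) := by
  simp only [ySymProd, rootGenerator, Polynomial.eval₂_finsetSum, map_sum, Polynomial.eval₂_mul,
    Polynomial.eval₂_pow, Polynomial.eval₂_neg, Polynomial.eval₂_one, Polynomial.eval₂_C,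
    Polynomial.eval₂_X, map_mul, map_pow, map_neg, map_one]
  refine Finset.sum_congr rfl fun j _ => ?_
  rw [mul_comm (f _ ^ _)]
  rfl

theorem deformedRelations_zero_iff {f : invZ2 n d →+* A} :
    DeformedRelations (0 : Fin k → A) f ↔ ∀ p ∈ invariantGenerators n k d, f p = 0 := by
  have hzero (r : ℕ) : PowerSeries.coeff r ((revProd (0 : Fin k → A) : PowerSeries A) * ySeries f) =
      f (symInv n d (hSym d r)) := by
    simp [revProd, ySeries]
  constructor
  · rintro h _ ((⟨r, hr, rfl⟩ | ⟨r, hr, rfl⟩) | ⟨i, rfl⟩)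
    · rw [← hzero, h.coeff_revProd_mul r hr]
    · have hxy := h.coeff_revProd_xInv_mul r hr
      rwa [coeff_revProd_xInv_mul_ySeries, (isUnit_one.neg.pow r).mul_right_eq_zero] at hxy
    · rw [← eval₂_ySymProd_eq, h.eval₂_ySymProd i]
  · intro h
    refine ⟨fun r hr => ?_, fun r hr => ?_, fun i => ?_⟩
    · rw [hzero, h _ (Or.inl (Or.inl ⟨r, hr, rfl⟩))]
    · rw [coeff_revProd_xInv_mul_ySeries, h _ (Or.inl (Or.inr ⟨r, hr, rfl⟩)), mul_zero]
    · rw [eval₂_ySymProd_eq, h _ (Or.inr ⟨i, rfl⟩)]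

theorem DeformedRelations.span_le_comap {z : Fin k → A} {f : invZ2 n d →+* A}
    (h : DeformedRelations z f) {I : Ideal A} (hz : ∀ i, z i ∈ I) :
    Ideal.span (invariantGenerators n k d) ≤ I.comap f := by
  have hzero : Ideal.Quotient.mk I ∘ z = 0 :=
    funext fun i => Ideal.Quotient.eq_zero_iff_mem.mpr (hz i)
  have hrel := hzero ▸ h.map (Ideal.Quotient.mk I)
  exact Ideal.span_le.mpr fun p hp =>
    Ideal.mem_comap.mpr <|
      Ideal.Quotient.eq_zero_iff_mem.mp (deformedRelations_zero_iff.mp hrel p hp)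

end Relations

section SchurFamily

/-- Beta sets: strictly decreasing sequences, with values below `k`. They encode the partitions in
a `d × (k - d)` rectangle. -/
abbrev BetaIdx (k d : ℕ) := {β : Fin d → Fin k // StrictAnti β}

variable {n k d : ℕ}

variable (n k d) in
/-- The set `C`, as a family of invariants. -/
noncomputable def schurFamily (p : SubstaircaseIdx n d × BetaIdx k d) : invZ2 n d :=
  schurMonomial (fun j => p.1.1 j) fun i => p.2.1 i

theorem closure_range_symInv_union_range_xInv :
    Subring.closure (Set.range (symInv n d) ∪ Set.range (xInv n d)) = ⊤ := by
  set T := Subring.closure (Set.range (symInv n d) ∪ Set.range (xInv n d))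
  have hspan : Submodule.span ℤ (Set.range fun p : (Fin n → ℕ) × (Fin d → ℕ) =>
      (schurMonomial p.1 p.2 : invZ2 n d)) ≤ AddSubgroup.toIntSubmodule T.toAddSubgroup := by
    rw [Submodule.span_le]
    rintro _ ⟨p, rfl⟩
    have hx (i : Fin n) : xInv n d i ^ p.1 i ∈ T :=
      pow_mem (Subring.subset_closure (Set.mem_union_right _ (Set.mem_range_self i))) _
    exact T.mul_mem (prod_mem fun i _ => hx i)
      (Subring.subset_closure (Set.mem_union_left _ (Set.mem_range_self _)))
  rw [eq_top_iff]
  intro q _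
  exact hspan (span_range_schurMonomial ▸ Submodule.mem_top)

variable {Q : Type*} [CommRing Q] {f : invZ2 n d →+* Q}

theorem ySeries_mul_map_reflect_ySymProd :
    ySeries f * (((ySymProd d).reflect d).map (f.comp (symInv n d : _ →+* invZ2 n d)) :
      PowerSeries Q) = 1 := by
  have h := congrArg (PowerSeries.map (f.comp (symInv n d : _ →+* invZ2 n d)))
    (mk_hSym_mul_reflect_ySymProd (d := d))
  rw [map_mul, map_one, ← Polynomial.polynomial_map_coe] at h
  rw [← h]
  congr 1

theorem DeformedRelations.staircaseDatum {z : Fin k → Q} (h : DeformedRelations z f)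
    (hf : Function.Surjective f) (hdn : d ≤ n) :
    StaircaseDatum (f.comp (symInv n d : _ →+* invZ2 n d)) (f ∘ xInv n d) 1 (ySymProd d) where
  monic_left := Polynomial.monic_one
  monic_right := monic_ySymProd
  eval₂_mul_eq_zero i := by
    rw [Function.comp_apply, h.eval₂_ySymProd i, mul_zero]
  map_dvd := by
    have hdeg : (((ySymProd d).reflect d).map
        (f.comp (symInv n d : _ →+* invZ2 n d))).natDegree ≤ d :=
      Polynomial.natDegree_map_le.trans
        ((Polynomial.natDegree_reflect_le ..).trans (max_le le_rfl natDegree_ySymProd.le))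
    have hdvd := reflect_dvd_reflect hdn hdeg ySeries_mul_map_reflect_ySymProd
      h.coeff_revProd_xInv_mul
    have hreflect := reflect_revProd (f ∘ xInv n d)
    rw [Fintype.card_fin] at hreflect
    rwa [hreflect, Polynomial.reflect_map, Polynomial.reflect_reflect] at hdvd
  closure_eq_top := by
    rw [RingHom.coe_comp, Set.range_comp f, Set.range_comp f, ← Set.image_union,
      ← RingHom.map_closure]
    refine (congrArg _ closure_range_symInv_union_range_xInv).trans ?_
    rw [← RingHom.range_eq_map, RingHom.range_eq_top.mpr hf]

theorem DeformedRelations.symInv_mem_span {α : Fin k → ℤ}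
    (h : DeformedRelations (fun i => (α i : Q)) f) (hdk : d ≤ k)
    (b : symmetricSubalgebra (Fin d) ℤ) :
    f (symInv n d b) ∈ Submodule.span ℤ (Set.range fun β : BetaIdx k d =>
      f (symInv n d (schurSym fun i => β.1 i))) := by
  have hschur (β : Fin d → ℕ) : f (symInv n d (schurSym β)) =
      jacobiTrudi (fun r => f (symInv n d (hSym d r))) β :=
    map_jacobiTrudi (f.comp (symInv n d : _ →+* invZ2 n d)) (hSym d) β
  simp only [hschur]
  have hle : Submodule.span ℤ (Set.range fun β => symInv n d (schurSym β)) ≤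
      (Submodule.span ℤ (Set.range fun β : BetaIdx k d =>
        jacobiTrudi (fun r => f (symInv n d (hSym d r))) fun i => β.1 i)).comap
          f.toIntAlgHom.toLinearMap := by
    rw [Submodule.span_le]
    rintro _ ⟨β, rfl⟩
    rw [SetLike.mem_coe, Submodule.mem_comap, AlgHom.toLinearMap_apply, RingHom.toIntAlgHom_apply,
      hschur]
    exact jacobiTrudi_mem_span_of_coeff_eq_zero hdk α h.coeff_revProd_mul β
  exact hle (symInv_mem_span_schurSym b)

theorem DeformedRelations.span_range_schurFamily {α : Fin k → ℤ}
    (h : DeformedRelations (fun i => (α i : Q)) f) (hf : Function.Surjective f) (hdk : d ≤ k)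
    (hdn : d ≤ n) :
    Submodule.span ℤ (Set.range (f ∘ schurFamily n k d)) = ⊤ := by
  have htop := (h.staircaseDatum hf hdn).staircaseSpan_eq_top
    (by rw [Polynomial.natDegree_one, zero_add, natDegree_ySymProd])
  rw [natDegree_ySymProd] at htop
  rw [← Submodule.toAddSubgroup_inj, Submodule.top_toAddSubgroup, eq_top_iff, ← htop, staircaseSpan,
    AddSubgroup.closure_le]
  rintro _ ⟨b, a, had, hfit, rfl⟩
  set m := ∏ j, (f ∘ xInv n d) j ^ a j
  have hmul : Submodule.span ℤ (Set.range fun β : BetaIdx k d =>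
      f (symInv n d (schurSym fun i => β.1 i))) ≤
      (Submodule.span ℤ (Set.range (f ∘ schurFamily n k d))).comap (LinearMap.mulRight ℤ m) := by
    rw [Submodule.span_le]
    rintro _ ⟨β, rfl⟩
    refine Submodule.subset_span ⟨(⟨fun j => ⟨a j, had j⟩, hfit⟩, β), ?_⟩
    simp [schurFamily, schurMonomial, m, mul_comm]
  exact hmul (h.symInv_mem_span hdk b)

end SchurFamily

section Independence

theorem linearIndependent_ringHom_pi_comp {D R P ι : Type*} [CommRing D] [IsDomain D] [CommRing R]
    [Finite P] [Finite ι] {ev : P → R →+* D} (hev : Function.Injective ev) {c : ι → R}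
    (hcard : Nat.card ι = Nat.card P)
    (hspan : ∀ r, RingHom.pi ev r ∈ Submodule.span D (Set.range (RingHom.pi ev ∘ c))) :
    LinearIndependent D (RingHom.pi ev ∘ c) := by
  have := Fintype.ofFinite P
  have := Fintype.ofFinite ι
  let K := FractionRing D
  let toK : (P → D) →ₗ[D] P → K := (Algebra.linearMap D K).compLeft P
  have hrows : LinearIndependent K fun (p : P) (r : R) => algebraMap D K (ev p r) :=
    (linearIndependent_monoidHom R K).comp
      (fun p => ((algebraMap D K).comp (ev p) : R →* K)) fun p q hpq => hev <| RingHom.ext fun r =>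
        IsFractionRing.injective D K (DFunLike.congr_fun hpq r)
  have hcols : Submodule.span K (Set.range (toK ∘ RingHom.pi ev ∘ c)) = ⊤ := by
    rw [eq_top_iff, ← span_flip_eq_top_iff_linearIndependent.mpr hrows, Submodule.span_le]
    rintro _ ⟨r, rfl⟩
    have hmem := Submodule.mem_map_of_mem (f := toK) (hspan r)
    rw [Submodule.map_span, ← Set.range_comp] at hmem
    exact Submodule.span_le_restrictScalars D K _ hmem
  have hli := linearIndependent_of_top_le_span_of_card_eq_finrank hcols.ge <| by
    rw [Module.finrank_fintype_fun_eq_card, ← Nat.card_eq_fintype_card, hcard,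
      Nat.card_eq_fintype_card]
  exact LinearIndependent.of_comp toK (hli.restrict_scalars' D)

theorem dvd_of_sum_smul_mem {R Q ι : Type*} [CommRing R] [CommRing Q] [Fintype ι] {f : R →+* Q}
    {c : ι → R} (hli : LinearIndependent ℤ (f ∘ c))
    (hspan : Submodule.span ℤ (Set.range (f ∘ c)) = ⊤) {I : Ideal R} {N : ℤ}
    (hI : I ≤ (Ideal.span {(N : Q)}).comap f) {m : ι → ℤ} (hm : ∑ i, m i • c i ∈ I) (i : ι) :
    N ∣ m i := by
  obtain ⟨q, hq⟩ := Ideal.mem_span_singleton.mp (hI hm)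
  obtain ⟨a, rfl⟩ := (Submodule.mem_span_range_iff_exists_fun ℤ).mp (hspan ▸ Submodule.mem_top :
    q ∈ Submodule.span ℤ (Set.range (f ∘ c)))
  refine ⟨a i, ?_⟩
  have hzero : ∑ i, (m i - N * a i) • (f ∘ c) i = 0 := by
    simp only [sub_smul, Finset.sum_sub_distrib, mul_smul, ← Finset.smul_sum]
    rw [sub_eq_zero, ← Int.cast_smul_eq_zsmul Q N, smul_eq_mul, ← hq, map_sum]
    simp
  exact sub_eq_zero.mp (Fintype.linearIndependent_iff.mp hli _ hzero i)

variable {n k d : ℕ} {A : Type*} [CommRing A]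

/-- Pairs of a beta set `β` and a surjection `x`, which parametrize the points `y_j = α (β j)`,
`x_i = y_(x i)` at which the deformed relations hold. -/
abbrev PointIdx (n k d : ℕ) := BetaIdx k d × {x : Fin n → Fin d // Function.Surjective x}

/-- Evaluation of the invariants at the point of `PointIdx` with the given index. -/
noncomputable def pointEval (α : Fin k → A) (p : PointIdx n k d) : invZ2 n d →+* A :=
  ((aeval (Sum.elim (fun i => α (p.1.1 (p.2.1 i))) (α ∘ p.1.1))).comp (invZ2 n d).val).toRingHom

theorem pointEval_xInv (α : Fin k → A) (p : PointIdx n k d) (i : Fin n) :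
    pointEval α p (xInv n d i) = α (p.1.1 (p.2.1 i)) :=
  aeval_X ..

theorem pointEval_symInv (α : Fin k → A) (p : PointIdx n k d) (s : symmetricSubalgebra (Fin d) ℤ) :
    pointEval α p (symInv n d s) = aeval (α ∘ p.1.1) (s : MvPolynomial (Fin d) ℤ) := by
  refine (aeval_rename ..).trans ?_
  rw [Sum.elim_comp_inr]
  rfl

theorem deformedRelations_pointEval (α : Fin k → A) (p : PointIdx n k d) :
    DeformedRelations α (pointEval α p) := by
  have hseries : ySeries (pointEval α p) = hsymmSeries (α ∘ p.1.1) := by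
    ext1 r
    simp [ySeries, hsymmSeries, pointEval_symInv, hSym]
  have hsection : α ∘ p.1.1 =
      (pointEval α p ∘ xInv n d) ∘ Function.surjInv p.2.2 := by
    ext j
    simp [pointEval_xInv, Function.surjInv_eq]
  refine ⟨fun r hr => ?_, fun r hr => ?_, fun i => ?_⟩
  · rw [hseries]
    exact coeff_revProd_mul_hsymmSeries α p.1.2.injective (by simpa using hr)
  · rw [hseries, hsection]
    exact coeff_revProd_mul_hsymmSeries _ (Function.injective_surjInv _) (by simpa using hr)
  · have hcomp : (pointEval α p).comp (symInv n d : _ →+* invZ2 n d) =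
        (aeval (α ∘ p.1.1) : _ →ₐ[ℤ] A).toRingHom.comp
          (symmetricSubalgebra (Fin d) ℤ).val.toRingHom :=
      RingHom.ext (pointEval_symInv α p)
    rw [hcomp, ← Polynomial.eval_map, ← Polynomial.map_map, map_val_ySymProd, pointEval_xInv,
      Polynomial.map_prod, Polynomial.eval_prod]
    exact Finset.prod_eq_zero (Finset.mem_univ (p.2.1 i)) (by simp)

theorem pointEval_injective {α : Fin k → A} (hα : Function.Injective α) :
    Function.Injective (pointEval α : PointIdx n k d → invZ2 n d →+* A) := by
  rintro ⟨⟨β, hβ⟩, x, hx⟩ ⟨⟨β', hβ'⟩, x', hx'⟩ h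
  have hcomp : β ∘ x = β' ∘ x' := by
    ext1 i
    have hi := DFunLike.congr_fun h (xInv n d i)
    rw [pointEval_xInv, pointEval_xInv] at hi
    exact hα hi
  obtain rfl : β = β' := by
    rw [← hβ.range_inj hβ', ← hx.range_comp, hcomp, hx'.range_comp]
  obtain rfl : x = x' := hβ.injective.comp_left hcomp
  rfl

variable (n d) in
/-- The ring of joint values of the invariants at all points. -/
noncomputable abbrev JointValues (α : Fin k → ℤ) :=
  (RingHom.pi (pointEval α : PointIdx n k d → invZ2 n d →+* ℤ)).range

/-- Joint evaluation of the invariants at all points, onto its image. -/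
noncomputable def jointEval (α : Fin k → ℤ) : invZ2 n d →+* JointValues n d α :=
  (RingHom.pi (pointEval α)).rangeRestrict

theorem jointEval_surjective (α : Fin k → ℤ) :
    Function.Surjective (jointEval α : invZ2 n d →+* _) :=
  RingHom.rangeRestrict_surjective _

theorem deformedRelations_jointEval (α : Fin k → ℤ) :
    DeformedRelations (fun i => (α i : JointValues n d α)) (jointEval α) := by
  refine DeformedRelations.of_forall_map
    (g := fun p => (Pi.evalRingHom (fun _ => ℤ) p).comp (Subring.subtype _))
    (fun a ha => Subtype.ext (funext ha)) fun p => ?_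
  have hα : (Pi.evalRingHom (fun _ => ℤ) p).comp (JointValues n d α).subtype ∘
      (fun i => (α i : JointValues n d α)) = α := by
    ext i
    simp
  rw [hα]
  exact deformedRelations_pointEval α p

theorem span_range_jointEval_schurFamily (α : Fin k → ℤ) (hdk : d ≤ k) (hdn : d ≤ n) :
    Submodule.span ℤ (Set.range (jointEval α ∘ schurFamily n k d)) = ⊤ :=
  (deformedRelations_jointEval α).span_range_schurFamily (jointEval_surjective α) hdk hdn

theorem linearIndependent_jointEval_schurFamily {α : Fin k → ℤ} (hα : Function.Injective α)
    (hdk : d ≤ k) (hdn : d ≤ n) :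
    LinearIndependent ℤ (jointEval α ∘ schurFamily n k d) := by
  let toPi := (JointValues n d α).subtype.toIntAlgHom.toLinearMap
  refine LinearIndependent.of_comp toPi <|
    linearIndependent_ringHom_pi_comp (pointEval_injective hα) ?_ fun r => ?_
  · rw [Nat.card_prod, Nat.card_prod, card_substaircaseIdx, mul_comm]
  · have hr : jointEval α r ∈ Submodule.span ℤ
        (Set.range (jointEval α ∘ schurFamily n k d)) :=
      span_range_jointEval_schurFamily α hdk hdn ▸ Submodule.mem_top
    have hmem := Submodule.mem_map_of_mem (f := toPi) hr
    rwa [Submodule.map_span, ← Set.range_comp] at hmem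

end Independence

section QuotientBasis

variable {n k d : ℕ}

theorem span_invariantGenerators_le_comap_jointEval {α : Fin k → ℤ} {N : ℤ} (hα : ∀ i, N ∣ α i) :
    Ideal.span (invariantGenerators n k d) ≤
      (Ideal.span {(N : JointValues n d α)}).comap (jointEval α) :=
  (deformedRelations_jointEval α).span_le_comap fun i =>
    Ideal.mem_span_singleton.mpr (Int.cast_dvd_cast _ _ (hα i))

theorem linearIndependent_mk_schurFamily (hdk : d ≤ k) (hdn : d ≤ n) :
    LinearIndependent ℤ fun p : SubstaircaseIdx n d × BetaIdx k d =>
      Ideal.Quotient.mk (Ideal.span (invariantGenerators n k d)) (schurFamily n k d p) := by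
  have := Fintype.ofFinite (SubstaircaseIdx n d × BetaIdx k d)
  rw [Fintype.linearIndependent_iff]
  intro m hm p
  have hmem : ∑ p, m p • schurFamily n k d p ∈ Ideal.span (invariantGenerators n k d) := by
    rw [← Ideal.Quotient.eq_zero_iff_mem, map_sum, ← hm]
    simp
  have hN : |m p| + 1 ≠ 0 := by positivity
  have hinj : Function.Injective fun i : Fin k => (|m p| + 1) * (i : ℤ) := fun i j hij =>
    Fin.ext (Nat.cast_injective (mul_left_cancel₀ hN hij))
  exact Int.eq_zero_of_abs_lt_dvd
    (dvd_of_sum_smul_mem (linearIndependent_jointEval_schurFamily hinj hdk hdn)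
      (span_range_jointEval_schurFamily _ hdk hdn)
      (span_invariantGenerators_le_comap_jointEval fun i => dvd_mul_right _ _) hmem p)
    (lt_add_one _)

theorem span_range_mk_schurFamily (hdk : d ≤ k) (hdn : d ≤ n) :
    Submodule.span ℤ (Set.range (Ideal.Quotient.mk (Ideal.span (invariantGenerators n k d)) ∘
      schurFamily n k d)) = ⊤ := by
  have hrel : DeformedRelations (0 : Fin k → invZ2 n d ⧸ Ideal.span (invariantGenerators n k d))
      (Ideal.Quotient.mk (Ideal.span (invariantGenerators n k d))) :=
    deformedRelations_zero_iff.mpr fun p hp =>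
      Ideal.Quotient.eq_zero_iff_mem.mpr (Ideal.subset_span hp)
  have hcast : (0 : Fin k → invZ2 n d ⧸ Ideal.span (invariantGenerators n k d)) =
      fun i => (((0 : Fin k → ℤ) i : ℤ) : invZ2 n d ⧸ Ideal.span (invariantGenerators n k d)) :=
    funext fun _ => Int.cast_zero.symm
  exact (hcast ▸ hrel).span_range_schurFamily Ideal.Quotient.mk_surjective hdk hdn

theorem coe_schurMonomial (a : Fin n → ℕ) (β : Fin d → ℕ) :
    (schurMonomial a β : MvPolynomial (Fin n ⊕ Fin d) ℤ) =
      (∏ j, X (Sum.inl j) ^ a j) * rename Sum.inr (schurSym β : MvPolynomial (Fin d) ℤ) := by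
  rw [schurMonomial, MulMemClass.coe_mul, SubmonoidClass.coe_finsetProd]
  rfl

theorem schurPoly_eq_schurSym (lam : Fin d → ℕ) :
    schurPoly d lam = schurSym (lam + emptyBeta d) := by
  have hindex (i j : Fin d) : (((lam + emptyBeta d) i : ℕ) : ℤ) - ((d : ℤ) - 1) + (j : ℕ) =
      (lam i : ℤ) - (i : ℕ) + (j : ℕ) := by
    have := i.2
    simp only [Pi.add_apply, emptyBeta]
    omega
  refine Eq.trans ?_
    (map_jacobiTrudi (symmetricSubalgebra (Fin d) ℤ).val.toRingHom (hSym d) _).symm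
  rw [schurPoly, jacobiTrudi]
  congr 1
  ext1 i j
  rw [Matrix.of_apply, Matrix.of_apply, jacobiTrudiRow, hindex]
  rfl

theorem strictAnti_emptyBeta : StrictAnti (emptyBeta d) := fun i j hij => by
  simp only [emptyBeta]
  omega

theorem exists_eq_add_emptyBeta_of_strictAnti {β : Fin d → ℕ} (hβ : StrictAnti β)
    (hβk : ∀ i, β i < k) :
    ∃ lam : Fin d → ℕ, Antitone lam ∧ (∀ i, lam i ≤ k - d) ∧ lam + emptyBeta d = β := by
  obtain _ | d := d
  · exact ⟨β, hβ.antitone, fun i => i.elim0, Subsingleton.elim _ _⟩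
  have hanti : Antitone fun i => β i + i := by
    rw [Fin.antitone_iff_succ_le]
    intro i
    have := hβ i.castSucc_lt_succ
    simp only [Fin.val_succ, Fin.val_castSucc]
    omega
  have hfirst (i : Fin (d + 1)) : β i + i < k := (hanti (Fin.zero_le i)).trans_lt (hβk 0)
  have hlast (i : Fin (d + 1)) : d ≤ β i + i :=
    (Nat.le_add_left ..).trans (hanti (Fin.le_last i))
  refine ⟨fun i => β i + i - d, fun i j hij => tsub_le_tsub_right (hanti hij) d, fun i => ?_,
    funext fun i => ?_⟩
  · have := hfirst i
    dsimp only
    omega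
  · have := hlast i
    simp only [Pi.add_apply, emptyBeta]
    omega

theorem preimage_CsetZ (hd : 1 ≤ d) (hdk : d ≤ k) :
    Subtype.val ⁻¹' CsetZ n k d = Set.range (schurFamily n k d) := by
  ext p
  constructor
  · rintro ⟨a, ha, lam, hlam, hlamk, hp⟩
    obtain ⟨had, hfit⟩ := (isSubstaircase_iff hd).mp ha
    have hlt (i : Fin d) : (lam + emptyBeta d) i < k := by
      have := hlamk i
      simp only [Pi.add_apply, emptyBeta]
      omega
    refine ⟨(⟨fun j => ⟨a j, had j⟩, hfit⟩, ⟨fun i => ⟨_, hlt i⟩,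
      hlam.add_strictAnti strictAnti_emptyBeta⟩), Subtype.ext ?_⟩
    rw [hp, schurPoly_eq_schurSym, schurFamily, coe_schurMonomial]
  · rintro ⟨⟨⟨a, hfit⟩, β, hβ⟩, rfl⟩
    obtain ⟨lam, hlam, hlamk, hβlam⟩ :=
      exists_eq_add_emptyBeta_of_strictAnti (β := fun i => β i) hβ fun i => (β i).2
    refine ⟨_, (isSubstaircase_iff hd).mpr ⟨fun j => (a j).2, hfit⟩, lam, hlam, hlamk, ?_⟩
    rw [schurPoly_eq_schurSym, hβlam, schurFamily, coe_schurMonomial]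

end QuotientBasis

end SpanningLine

theorem G_generates_and_CsetZ_basis_general (n k d : ℕ) (hd : 1 ≤ d) (hk : d ≤ k) (hn : d ≤ n) :
    Ideal.comap (invZ2 n d).val (Ideal.span (GgensZ n k d)) =
      Ideal.span (Subtype.val ⁻¹' GgensZ n k d : Set ↥(invZ2 n d)) ∧
    LinearIndependent ℤ (fun q : ↥(Subtype.val ⁻¹' CsetZ n k d : Set ↥(invZ2 n d)) =>
      Ideal.Quotient.mk (Ideal.comap (invZ2 n d).val (Ideal.span (GgensZ n k d)))
        (q : ↥(invZ2 n d))) ∧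
    Submodule.span ℤ
      (⇑(Ideal.Quotient.mk (Ideal.comap (invZ2 n d).val (Ideal.span (GgensZ n k d)))) ''
        (Subtype.val ⁻¹' CsetZ n k d)) = ⊤ := by
  have hG := SpanningLine.image_invariantGenerators (n := n) (k := k) (d := d)
  have hI : Ideal.comap (invZ2 n d).val (Ideal.span (GgensZ n k d)) =
      Ideal.span (SpanningLine.invariantGenerators n k d) := by
    rw [← hG, SpanningLine.comap_span_val_image]
  rw [hI, SpanningLine.preimage_CsetZ hd hk, ← Set.range_comp, ← hG,
    Set.preimage_image_eq _ Subtype.val_injective]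
  have hli := SpanningLine.linearIndependent_mk_schurFamily hk hn
  exact ⟨rfl, (linearIndepOn_range_iff hli.injective.of_comp _).mpr hli,
    SpanningLine.span_range_mk_schurFamily hk hn⟩

/-- The set `G` generates the ideal `J_{n,k,d} ∩ ℤ[x,y]^{S_d}` as an
ideal of the invariant ring, and `C_{n,k,d}` descends to a `ℤ`-module basis of
`ℤ[x,y]^{S_d}/(J_{n,k,d} ∩ ℤ[x,y]^{S_d})`. -/
theorem G_generates_and_CsetZ_basis (n k d : ℕ) (hd : 1 ≤ d) (hk : d ≤ k) (hn : k ≤ n) :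
    Ideal.comap (invZ2 n d).val (Ideal.span (GgensZ n k d)) =
      Ideal.span (Subtype.val ⁻¹' GgensZ n k d : Set ↥(invZ2 n d)) ∧
    LinearIndependent ℤ (fun q : ↥(Subtype.val ⁻¹' CsetZ n k d : Set ↥(invZ2 n d)) =>
      Ideal.Quotient.mk (Ideal.comap (invZ2 n d).val (Ideal.span (GgensZ n k d)))
        (q : ↥(invZ2 n d))) ∧
    Submodule.span ℤ
      (⇑(Ideal.Quotient.mk (Ideal.comap (invZ2 n d).val (Ideal.span (GgensZ n k d)))) ''
        (Subtype.val ⁻¹' CsetZ n k d)) = ⊤ :=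
  G_generates_and_CsetZ_basis_general n k d hd hk (hk.trans hn)
end
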